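/- arXiv:1601.07343 — 3 statements merged into one kernel-verified Lean document; each statement's English description precedes it below -/
import Mathlib

section
/- No double circulant (pure or bordered) self-dual binary code of length 96 with minimum weight 16 has a self-dual neighbor of minimum weight at least 18: if C is such a code and C' is a self-dual code of length 96 with dim(C ∩ C') = 47, then the minimum weight of C' is at most 16. -/
/-- The standard inner product on `ι → ZMod 2`. -/
def dot {ι : Type*} [Fintype ι] (x y : ι → ZMod 2) : ZMod 2 := ∑ i, x i * y i

/-- A binary linear code is self-dual if it coincides with its dual. -/
def IsSelfDual {ι : Type*} [Fintype ι] (C : Submodule (ZMod 2) (ι → ZMod 2)) : Prop :=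
  ∀ x, x ∈ C ↔ ∀ y ∈ C, dot x y = 0

/-- `C` has minimum (nonzero) weight exactly `d`. -/
def MinWeightIs {ι : Type*} [Fintype ι] (C : Submodule (ZMod 2) (ι → ZMod 2)) (d : ℕ) : Prop :=
  (∃ x ∈ C, x ≠ 0 ∧ hammingNorm x = d) ∧ ∀ x ∈ C, x ≠ 0 → d ≤ hammingNorm x

/-- `A_i(C)`: the number of codewords of `C` of Hamming weight `i`. -/
noncomputable def weightEnum {ι : Type*} [Fintype ι] (C : Submodule (ZMod 2) (ι → ZMod 2)) (i : ℕ) : ℕ :=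
  Set.ncard {x : ι → ZMod 2 | x ∈ C ∧ hammingNorm x = i}

/-- Two codes are equivalent if a coordinate permutation maps one onto the other. -/
def CodeEquiv {ι : Type*} [Fintype ι] (C C' : Submodule (ZMod 2) (ι → ZMod 2)) : Prop :=
  ∃ σ : Equiv.Perm ι, Submodule.map (LinearMap.funLeft (ZMod 2) (ZMod 2) ⇑σ) C = C'

/-- The order of the automorphism group of a code: the number of coordinate
permutations mapping the code onto itself. -/
noncomputable def autGroupOrder {ι : Type*} [Fintype ι] (C : Submodule (ZMod 2) (ι → ZMod 2)) : ℕ :=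
  Nat.card {σ : Equiv.Perm ι // Submodule.map (LinearMap.funLeft (ZMod 2) (ZMod 2) ⇑σ) C = C}

/-- A circulant matrix: each row is the cyclic shift of the previous one. -/
def IsCirculant {n : ℕ} (R : Matrix (Fin n) (Fin n) (ZMod 2)) : Prop :=
  ∃ v : Fin n → ZMod 2, R = Matrix.circulant v

/-- The pure double circulant code with generator matrix `(I_n | R)`. -/
def pureDCC {n : ℕ} (R : Matrix (Fin n) (Fin n) (ZMod 2)) :
    Submodule (ZMod 2) (Fin n ⊕ Fin n → ZMod 2) :=
  Submodule.span (ZMod 2)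
    (Set.range fun i : Fin n =>
      Sum.elim (fun j => if j = i then (1 : ZMod 2) else 0) (R i))

/-- A bordered matrix: first row `(0,1,…,1)`, first column `(0,1,…,1)ᵀ`, and
lower-right block an `n × n` circulant matrix. -/
def IsBorderMatrix {n : ℕ} (B : Matrix (Fin (n + 1)) (Fin (n + 1)) (ZMod 2)) : Prop :=
  B 0 0 = 0 ∧ (∀ j, j ≠ 0 → B 0 j = 1) ∧ (∀ i, i ≠ 0 → B i 0 = 1) ∧
  ∃ R' : Matrix (Fin n) (Fin n) (ZMod 2), IsCirculant R' ∧
    ∀ i j : Fin n, B i.succ j.succ = R' i j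

/-- The bordered double circulant code with generator matrix `(I_{n+1} | B)`. -/
def borderedDCC {n : ℕ} (B : Matrix (Fin (n + 1)) (Fin (n + 1)) (ZMod 2)) :
    Submodule (ZMod 2) (Fin (n + 1) ⊕ Fin (n + 1) → ZMod 2) :=
  Submodule.span (ZMod 2)
    (Set.range fun i : Fin (n + 1) =>
      Sum.elim (fun j => if j = i then (1 : ZMod 2) else 0) (B i))

/-!
A self-dual neighbor of `C` of minimum weight greater than `16` contains a word `y` such that
`c ∈ C` and `c ⬝ᵥ y = 0` imply `c ∈ C'`. Hence `c ⬝ᵥ y = 1` for every `c ∈ C` of weight `16`,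
while `1 ⬝ᵥ y = 0`, and it suffices to show that no such `y` exists.

If `C` is bordered, all its weights are divisible by four. The sum of the cyclic shifts of a
codeword `c` depends on its two border coordinates only, so the condition on `y` also holds for
the word of weight two supported on the border. Poisson summation over `C`, applied to a
polynomial that vanishes at all weights of `C` except `0`, `16`, `80`, `96` and has nonnegative
Krawtchouk coefficients, then gives a contradiction: the codewords `0` and `1` contribute exactly
the lower bound, and those of weight `16` make a negative contribution.

If `C` is pure, it consists of the words `(a, a * r)` for a unitary element `r` of the binary
group algebra of `ZMod 48`, and `y` gives a linear functional on the group algebra that is `1` at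
all light words, those of minimum weight, and hence maps `b * a` to the parity of the weight of
`b` for every light word `a`. Elements with such functionals are closed under equivalence and
under passage to quotients of the group. Along `ZMod 3`, `ZMod 6`, `ZMod 12`, `ZMod 24`,
`ZMod 48`, two unitary lifts of the same element differ by a pulled back multiple of a symmetric
word, and the weight of an element that lifts is `1` modulo `4`. So all candidates for `r` can be
enumerated, and each is excluded by a word that is too light or by a relation `∑ i, b i * a i = 0`
between light words in which the total weight of the `b i` is odd.
-/

namespace DoubleCirculant

open AddMonoidAlgebra Finset

section GroupAlgebra

variable {G H : Type*}

/-- The Hamming weight of an element of the binary group algebra of `G`, read as a word whose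
coordinates are indexed by `G`. -/
def weight (a : (ZMod 2)[G]) : ℕ := #a.coeff.support

theorem ne_zero_iff_eq_one (x : ZMod 2) : x ≠ 0 ↔ x = 1 := by
  revert x; decide

theorem eq_zero_or_one (x : ZMod 2) : x = 0 ∨ x = 1 := by
  revert x; decide

theorem add_self_eq_zero (a : (ZMod 2)[G]) : a + a = 0 := by
  ext g
  exact CharTwo.add_self_eq_zero (a.coeff g)

theorem weight_eq_zero {a : (ZMod 2)[G]} : weight a = 0 ↔ a = 0 := by
  rw [weight, card_eq_zero, Finsupp.support_eq_empty, coeff_eq_zero]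

theorem weight_eq_hammingNorm [Fintype G] (a : (ZMod 2)[G]) : weight a = hammingNorm a.coeff := by
  rw [weight, hammingNorm]
  congr 1
  ext g
  simp

theorem weight_add [DecidableEq G] (a b : (ZMod 2)[G]) :
    weight (a + b) + 2 * #(a.coeff.support ∩ b.coeff.support) = weight a + weight b := by
  have hsupport : (a + b).coeff.support =
      (a.coeff.support ∪ b.coeff.support) \ (a.coeff.support ∩ b.coeff.support) := by
    ext g
    have (x y : ZMod 2) : x + y ≠ 0 ↔ (x ≠ 0 ∨ y ≠ 0) ∧ ¬ (x ≠ 0 ∧ y ≠ 0) := by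
      revert x y; decide
    simpa using this (a.coeff g) (b.coeff g)
  have hdiff := card_sdiff_add_card_eq_card
    (inter_subset_union (s := a.coeff.support) (t := b.coeff.support))
  have hunion := card_union_add_card_inter a.coeff.support b.coeff.support
  rw [weight, weight, weight, hsupport]
  lia

variable [AddCommGroup G] [AddCommGroup H]

/-- The anti-involution `X ^ g ↦ X ^ (-g)` of the group algebra, the transpose on circulant
matrices. -/
noncomputable def adjoint : (ZMod 2)[G] →+* (ZMod 2)[G] :=
  mapDomainRingHom (ZMod 2) (negAddMonoidHom : G →+ G)

/-- The sum of the coefficients, as a ring homomorphism. -/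
noncomputable def augmentation : (ZMod 2)[G] →+* ZMod 2 :=
  (AddMonoidAlgebra.lift (ZMod 2) (ZMod 2) G 1 : (ZMod 2)[G] →ₐ[ZMod 2] ZMod 2)

/-- An element of the group algebra is unitary if it is inverse to its adjoint; this says that the
double circulant code of the words `(a, a * r)` is self-dual. -/
def IsUnitary (r : (ZMod 2)[G]) : Prop := r * adjoint r = 1

theorem adjoint_single (g : G) (x : ZMod 2) : adjoint (single g x) = single (-g) x :=
  mapDomain_single

theorem coeff_adjoint (a : (ZMod 2)[G]) (g : G) : (adjoint a).coeff g = a.coeff (-g) := by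
  classical
  induction a using AddMonoidAlgebra.induction_linear with
  | zero => simp
  | add a b ha hb => simp [ha, hb]
  | single h x => simp [adjoint_single, Finsupp.single_apply, neg_eq_iff_eq_neg]

theorem adjoint_adjoint (a : (ZMod 2)[G]) : adjoint (adjoint a) = a := by
  ext g
  rw [coeff_adjoint, coeff_adjoint, neg_neg]

theorem coeff_mul_eq_sum [Fintype G] (a b : (ZMod 2)[G]) (g : G) :
    (a * b).coeff g = ∑ h, a.coeff h * b.coeff (g - h) := by
  rw [coeff_mul_apply_left, Finsupp.sum_fintype _ _ (by simp)]
  simp only [neg_add_eq_sub]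

theorem augmentation_single (g : G) (x : ZMod 2) : augmentation (single g x) = x := by
  simp [augmentation]

theorem augmentation_eq_weight (a : (ZMod 2)[G]) : augmentation a = weight a := by
  conv_lhs => rw [← sum_coeff_single a]
  rw [Finsupp.sum, map_sum, weight, card_eq_sum_ones, Nat.cast_sum]
  refine sum_congr rfl fun g hg => ?_
  rw [augmentation_single, Nat.cast_one, ← ne_zero_iff_eq_one]
  exact Finsupp.mem_support_iff.mp hg

theorem weight_single_mul (g : G) (a : (ZMod 2)[G]) : weight (single g 1 * a) = weight a := by
  refine card_bij' (fun h _ => h - g) (fun h _ => h + g) ?_ ?_ ?_ ?_ <;>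
    simp [coeff_single_mul_apply, neg_add_eq_sub]

theorem weight_mapDomainRingEquiv (e : G ≃+ H) (a : (ZMod 2)[G]) :
    weight (mapDomainRingEquiv (ZMod 2) e a) = weight a := by
  rw [weight, coeff_mapDomainRingEquiv]
  exact card_map e.toEquiv.toEmbedding

theorem mapDomainRingHom_adjoint (f : G →+ H) (a : (ZMod 2)[G]) :
    mapDomainRingHom (ZMod 2) f (adjoint a) = adjoint (mapDomainRingHom (ZMod 2) f a) := by
  induction a using AddMonoidAlgebra.induction_linear with
  | zero => simp
  | add a b ha hb => simp only [map_add, ha, hb]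
  | single g x => simp [adjoint_single]

theorem IsUnitary.map {r : (ZMod 2)[G]} (hr : IsUnitary r) (f : G →+ H) :
    IsUnitary (mapDomainRingHom (ZMod 2) f r) := by
  rw [IsUnitary, ← mapDomainRingHom_adjoint, ← map_mul, hr, map_one]

theorem IsUnitary.single_mul {r : (ZMod 2)[G]} (hr : IsUnitary r) (g : G) :
    IsUnitary (single g 1 * r) := by
  rw [IsUnitary, map_mul, adjoint_single, mul_mul_mul_comm, hr, mul_one, single_mul_single,
    add_neg_cancel, mul_one, one_def]

theorem IsUnitary.odd_weight {r : (ZMod 2)[G]} (hr : IsUnitary r) : Odd (weight r) := by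
  have h : augmentation r * augmentation (adjoint r) = 1 := by rw [← map_mul, hr, map_one]
  rw [← ZMod.natCast_ne_zero_iff_odd, ← augmentation_eq_weight]
  exact left_ne_zero_of_mul_eq_one h

end GroupAlgebra

section Pullback

variable {G H : Type*} [AddCommGroup G] [AddCommGroup H] [Finite G]

/-- The pullback of a word along a homomorphism of finite groups: it repeats every coordinate
once for each element of the fiber above it. -/
noncomputable def pullback (f : G →+ H) : (ZMod 2)[H] →+ (ZMod 2)[G] where
  toFun v := ofCoeff (Finsupp.equivFunOnFinite.symm fun g => v.coeff (f g))
  map_zero' := by ext; simp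
  map_add' v w := by ext; simp

theorem coeff_pullback (f : G →+ H) (v : (ZMod 2)[H]) (g : G) :
    (pullback f v).coeff g = v.coeff (f g) :=
  rfl

theorem pullback_injective {f : G →+ H} (hf : Function.Surjective f) :
    Function.Injective (pullback f) := by
  intro v w h
  ext x
  obtain ⟨g, rfl⟩ := hf x
  rw [← coeff_pullback, h, coeff_pullback]

theorem pullback_mul (f : G →+ H) (v : (ZMod 2)[H]) (a : (ZMod 2)[G]) :
    pullback f v * a = pullback f (v * mapDomainRingHom (ZMod 2) f a) := by
  induction a using AddMonoidAlgebra.induction_linear with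
  | zero => simp
  | add a b ha hb => simp only [mul_add, map_add, ha, hb]
  | single g x => ext k; simp [coeff_pullback, coeff_mul_single_apply]

theorem adjoint_pullback (f : G →+ H) (v : (ZMod 2)[H]) :
    adjoint (pullback f v) = pullback f (adjoint v) := by
  ext g
  simp only [coeff_adjoint, coeff_pullback, map_neg]

theorem weight_pullback {f : G →+ H} (hf : Function.Surjective f) (v : (ZMod 2)[H]) :
    weight (pullback f v) = Nat.card f.ker * weight v := by
  classical
  have := Fintype.ofFinite G
  have hfiber (x : H) (hx : x ∈ v.coeff.support) :
      #{g ∈ (pullback f v).coeff.support | f g = x} = Nat.card f.ker := by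
    obtain ⟨g, rfl⟩ := hf x
    rw [← Nat.card_congr (f.fiberEquivKer g), Nat.card_eq_fintype_card, Fintype.card_subtype]
    congr 1
    ext k
    simp +contextual [coeff_pullback, Finsupp.mem_support_iff.mp hx]
  rw [weight, card_eq_sum_card_fiberwise (f := f) (t := v.coeff.support), sum_congr rfl hfiber,
    sum_const, smul_eq_mul, mul_comm, weight]
  intro g hg
  simpa [coeff_pullback] using hg

end Pullback

section OddFunctional

variable {G H : Type*} [AddCommGroup G] [AddCommGroup H]

/-- A light word of the double circulant code of all `(a, a * r)`: a nonzero word whose weight,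
multiplied by `c`, is at most `d`. -/
def IsLight (c d : ℕ) (r a : (ZMod 2)[G]) : Prop :=
  a ≠ 0 ∧ c * (weight a + weight (a * r)) ≤ d

/-- The double circulant code of the words `(a, a * r)` is self-dual, its light words have weight
exactly `d` after scaling by `c`, and some linear functional takes the value `1` at all of them.
A self-dual neighbor of minimum weight greater than `d` provides such a functional with `c = 1`;
the factor `c` grows under passage to quotients of `G`. -/
structure HasOddFunctional (c d : ℕ) (r : (ZMod 2)[G]) : Prop where
  isUnitary : IsUnitary r
  weight_eq (a : (ZMod 2)[G]) (ha : IsLight c d r a) : c * (weight a + weight (a * r)) = d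
  exists_functional : ∃ φ : (ZMod 2)[G] →+ ZMod 2, ∀ a, IsLight c d r a → φ a = 1

theorem isLight_single_mul_iff {c d : ℕ} {r a : (ZMod 2)[G]} (g : G) :
    IsLight c d r (single g 1 * a) ↔ IsLight c d r a := by
  have hunit : IsUnit (single g 1 : (ZMod 2)[G]) :=
    .of_mul_eq_one (single (-g) 1) (by simp [single_mul_single, one_def])
  rw [IsLight, IsLight, hunit.mul_right_eq_zero.ne, mul_assoc, weight_single_mul,
    weight_single_mul]

namespace HasOddFunctional

variable {c d : ℕ} {r : (ZMod 2)[G]}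

theorem single_mul (h : HasOddFunctional c d r) (g : G) :
    HasOddFunctional c d (single g 1 * r) := by
  have hweight (a : (ZMod 2)[G]) : weight (a * (single g 1 * r)) = weight (a * r) := by
    rw [mul_left_comm, weight_single_mul]
  refine ⟨h.isUnitary.single_mul g, ?_, ?_⟩ <;> simp only [IsLight, hweight]
  exacts [h.weight_eq, h.exists_functional]

theorem map [Finite G] (h : HasOddFunctional c d r) {f : G →+ H} (hf : Function.Surjective f) :
    HasOddFunctional (c * Nat.card f.ker) d (mapDomainRingHom (ZMod 2) f r) := by
  have hweight (a : (ZMod 2)[H]) :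
      c * Nat.card f.ker * (weight a + weight (a * mapDomainRingHom (ZMod 2) f r)) =
        c * (weight (pullback f a) + weight (pullback f a * r)) := by
    rw [pullback_mul, weight_pullback hf, weight_pullback hf]
    ring
  have hlight {a : (ZMod 2)[H]}
      (ha : IsLight (c * Nat.card f.ker) d (mapDomainRingHom (ZMod 2) f r) a) :
      IsLight c d r (pullback f a) :=
    ⟨(map_ne_zero_iff _ (pullback_injective hf)).mpr ha.1, hweight a ▸ ha.2⟩
  obtain ⟨φ, hφ⟩ := h.exists_functional
  exact ⟨h.isUnitary.map f, fun a ha => hweight a ▸ h.weight_eq _ (hlight ha),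
    φ.comp (pullback f), fun a ha => hφ _ (hlight ha)⟩

theorem map_equiv [Finite G] (h : HasOddFunctional c d r) (e : G ≃+ G) :
    HasOddFunctional c d (mapDomainRingHom (ZMod 2) (e : G →+ G) r) := by
  have hker : Nat.card (e : G →+ G).ker = 1 := by
    rw [AddMonoidHom.ker_eq_bot_iff _ |>.mpr e.injective, AddSubgroup.card_bot]
  simpa only [hker, mul_one] using h.map (f := (e : G →+ G)) e.surjective

theorem exists_functional_mul (h : HasOddFunctional c d r) :
    ∃ φ : (ZMod 2)[G] →+ ZMod 2, ∀ a b, IsLight c d r a → φ (b * a) = augmentation b := by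
  obtain ⟨φ, hφ⟩ := h.exists_functional
  refine ⟨φ, fun a b ha => ?_⟩
  induction b using AddMonoidAlgebra.induction_linear with
  | zero => simp
  | add b b' hb hb' => rw [add_mul, map_add, map_add, hb, hb']
  | single g x =>
    obtain rfl | rfl := eq_zero_or_one x
    · simp
    · rw [hφ _ ((isLight_single_mul_iff g).mpr ha), augmentation_single]

theorem sum_augmentation_eq_zero (h : HasOddFunctional c d r)
    {l : List ((ZMod 2)[G] × (ZMod 2)[G])} (hl : ∀ p ∈ l, IsLight c d r p.1)
    (hsum : (l.map fun p => p.2 * p.1).sum = 0) : (l.map fun p => augmentation p.2).sum = 0 := by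
  obtain ⟨φ, hφ⟩ := h.exists_functional_mul
  rw [← map_zero φ, ← hsum, map_list_sum, List.map_map]
  exact congrArg List.sum (List.map_congr_left fun p hp => (hφ p.1 p.2 (hl p hp)).symm)

end HasOddFunctional

end OddFunctional

section Autocorrelation

variable {G : Type*} [AddCommGroup G] [DecidableEq G]

/-- The autocorrelation of a set at shift `k`: the number of pairs of its elements with
difference `k`. -/
def autocorrelation (S : Finset G) (k : G) : ℕ := #{g ∈ S | g - k ∈ S}

theorem autocorrelation_zero (S : Finset G) : autocorrelation S 0 = #S := by
  simp [autocorrelation]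

theorem autocorrelation_neg (S : Finset G) (k : G) :
    autocorrelation S (-k) = autocorrelation S k := by
  refine card_bij' (fun g _ => g + k) (fun g _ => g - k) ?_ ?_ ?_ ?_ <;>
    simp +contextual

theorem sum_autocorrelation [Fintype G] (S : Finset G) :
    ∑ k, autocorrelation S k = #S ^ 2 := by
  simp only [autocorrelation, card_filter]
  rw [sum_comm, sq, ← smul_eq_mul, ← sum_const]
  refine sum_congr rfl fun g _ => ?_
  rw [← card_filter]
  exact card_bij' (fun k _ => g - k) (fun k _ => g - k) (by simp) (by simp) (by simp) (by simp)

theorem natCast_autocorrelation [Fintype G] (x : G → ZMod 2) (k : G) :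
    (autocorrelation {g | x g ≠ 0} k : ZMod 2) = ∑ g, x g * x (g - k) := by
  have (a b : ZMod 2) : a * b = if a ≠ 0 ∧ b ≠ 0 then 1 else 0 := by revert a b; decide
  simp only [this, sum_boole, autocorrelation, filter_filter, mem_filter_univ]

theorem sum_filter_neg_ne_eq_zero [Fintype G] {M : Type*} [AddCommMonoid M] {f : G → M}
    (hneg : ∀ k, f (-k) = f k) (htwo : ∀ k, -k ≠ k → f k + f k = 0) :
    ∑ k with -k ≠ k, f k = 0 := by
  refine sum_involution (fun k _ => -k) ?_ ?_ ?_ ?_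
  · intro k hk
    rw [hneg]
    exact htwo k (mem_filter.mp hk).2
  · exact fun k hk _ => (mem_filter.mp hk).2
  · simp [eq_comm]
  · simp

theorem card_modEq_two_of_odd_autocorrelation [Fintype G] (hG : Fintype.card G ≡ 3 [MOD 4])
    {S : Finset G} (heven : Even #S) (hodd : ∀ k ≠ 0, Odd (autocorrelation S k)) :
    #S ≡ 2 [MOD 4] := by
  have hneg (k : G) : -k = k ↔ k = 0 := by
    refine ⟨fun hk => ?_, by rintro rfl; exact neg_zero⟩
    have hcard : Fintype.card G = 2 * (Fintype.card G / 2) + 1 := by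
      rw [Nat.ModEq] at hG
      lia
    have htwo : 2 • k = 0 := by rw [two_nsmul, ← neg_add_cancel k, hk]
    rw [← card_nsmul_eq_zero (x := k), hcard, succ_nsmul, mul_nsmul, htwo, nsmul_zero,
      zero_add]
  have hsum : ∑ k with -k ≠ k, (autocorrelation S k + 1 : ZMod 4) = 0 := by
    refine sum_filter_neg_ne_eq_zero (fun k => by rw [autocorrelation_neg]) fun k hk => ?_
    obtain ⟨m, hm⟩ := hodd k ((hneg k).not.mp hk)
    have (x : ZMod 4) : 2 * x + 1 + 1 + (2 * x + 1 + 1) = 0 := by revert x; decide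
    rw [hm]
    exact_mod_cast this m
  have htotal : (#S + 1 : ZMod 4) = #S ^ 2 + 3 := by
    have hsquare := congrArg (Nat.cast (R := ZMod 4)) (sum_autocorrelation S)
    have hcard : (Fintype.card G : ZMod 4) = 3 := (ZMod.natCast_eq_natCast_iff _ _ _).mpr hG
    calc (#S + 1 : ZMod 4) = ∑ k, (autocorrelation S k + 1 : ZMod 4) := by
          rw [← sum_filter_add_sum_filter_not _ (fun k => -k = k), hsum, add_zero]
          simp [hneg, filter_eq', autocorrelation_zero]
      _ = #S ^ 2 + 3 := by
          rw [sum_add_distrib, ← Nat.cast_sum, hsquare, sum_const, nsmul_one, card_univ, hcard,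
            Nat.cast_pow]
  obtain ⟨m, hm⟩ := heven
  rw [← ZMod.natCast_eq_natCast_iff]
  have (x : ZMod 4) : x + x + 1 = (x + x) ^ 2 + 3 → x + x = 2 := by revert x; decide
  rw [hm] at htotal ⊢
  exact_mod_cast this m (mod_cast htotal)

end Autocorrelation

section TwoToOne

variable {G H : Type*} [AddCommGroup G] [AddCommGroup H]

/-- `f` is a surjective homomorphism with kernel `{0, h}` of order two. -/
structure IsTwoToOne (f : G →+ H) (h : G) : Prop where
  surjective : Function.Surjective f
  ne_zero : h ≠ 0
  map_eq_zero_iff (g : G) : f g = 0 ↔ g = 0 ∨ g = h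

namespace IsTwoToOne

variable {f : G →+ H} {h : G}

theorem map_self (hf : IsTwoToOne f h) : f h = 0 := (hf.map_eq_zero_iff h).mpr (.inr rfl)

theorem map_eq_iff (hf : IsTwoToOne f h) (g k : G) : f g = f k ↔ g = k ∨ g = k + h := by
  rw [← sub_eq_zero, ← map_sub, hf.map_eq_zero_iff, sub_eq_zero, sub_eq_iff_eq_add']

theorem card_ker (hf : IsTwoToOne f h) : Nat.card f.ker = 2 := by
  have hker : (f.ker : Set G) = {0, h} := Set.ext hf.map_eq_zero_iff
  rw [← SetLike.coe_sort_coe, hker, Nat.card_coe_set_eq, Set.ncard_pair hf.ne_zero.symm]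

theorem map_single_self (hf : IsTwoToOne f h) :
    mapDomainRingHom (ZMod 2) f (single h 1) = 1 := by
  rw [mapDomainRingHom_apply, mapDomain_single, hf.map_self, one_def]

variable [Finite G]

theorem pullback_one (hf : IsTwoToOne f h) : pullback f 1 = 1 + single h 1 := by
  classical
  ext g
  simp only [coeff_pullback, one_def, coeff_add, Finsupp.add_apply, coeff_single,
    Finsupp.single_apply, eq_comm (a := (0 : H)), hf.map_eq_zero_iff g]
  grind [hf.ne_zero]

theorem pullback_map (hf : IsTwoToOne f h) (a : (ZMod 2)[G]) :
    pullback f (mapDomainRingHom (ZMod 2) f a) = (1 + single h 1) * a := by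
  rw [← hf.pullback_one, pullback_mul, one_mul]

theorem map_pullback (hf : IsTwoToOne f h) (v : (ZMod 2)[H]) :
    mapDomainRingHom (ZMod 2) f (pullback f v) = 0 := by
  obtain ⟨a, rfl⟩ : ∃ a, mapDomainRingHom (ZMod 2) f a = v := by
    obtain ⟨b, hb⟩ := Finsupp.mapDomain_surjective hf.surjective v.coeff
    exact ⟨ofCoeff b, by rw [← ofCoeff_coeff v, ← hb]; rfl⟩
  rw [hf.pullback_map, map_mul, map_add, map_one, hf.map_single_self, add_self_eq_zero, zero_mul]

theorem exists_pullback_eq (hf : IsTwoToOne f h) {a : (ZMod 2)[G]}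
    (ha : mapDomainRingHom (ZMod 2) f a = 0) : ∃ v, pullback f v = a := by
  have hshift (g : G) : a.coeff (g + h) = a.coeff g := by
    have hzero : a + single h 1 * a = 0 := by
      rw [← one_add_mul, ← hf.pullback_map, ha, map_zero]
    have := congrArg (fun b : (ZMod 2)[G] => b.coeff (g + h)) hzero
    rw [coeff_add, Finsupp.add_apply, coeff_single_mul_apply] at this
    simpa [CharTwo.add_eq_zero] using this
  have := Finite.of_surjective f hf.surjective
  refine ⟨ofCoeff (Finsupp.equivFunOnFinite.symm (a.coeff ∘ Function.surjInv hf.surjective)), ?_⟩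
  ext g
  rw [coeff_pullback]
  change a.coeff (Function.surjInv hf.surjective (f g)) = a.coeff g
  obtain hg | hg := (hf.map_eq_iff _ _).mp (Function.surjInv_eq hf.surjective (f g))
  · rw [hg]
  · rw [hg, hshift]

theorem exists_eq_add_pullback (hf : IsTwoToOne f h) {r r₁ : (ZMod 2)[G]} (hr : IsUnitary r)
    (hr₁ : IsUnitary r₁)
    (hmap : mapDomainRingHom (ZMod 2) f r = mapDomainRingHom (ZMod 2) f r₁) :
    ∃ v, adjoint v = v ∧ r = r₁ + pullback f (v * mapDomainRingHom (ZMod 2) f r₁) := by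
  set t := mapDomainRingHom (ZMod 2) f r₁ with ht
  have htt : t * adjoint t = 1 := hr₁.map f
  obtain ⟨w, hw⟩ := hf.exists_pullback_eq (a := r + r₁) (by rw [map_add, hmap, add_self_eq_zero])
  have hrw : r = r₁ + pullback f w := by
    rw [hw, add_left_comm, add_self_eq_zero, add_zero]
  have hsymm : w * adjoint t + adjoint w * t = 0 := by
    refine pullback_injective hf.surjective ?_
    have hunit : r₁ * adjoint r₁ + pullback f w * adjoint r₁ +
        (pullback f (adjoint w) * r₁ + pullback f w * pullback f (adjoint w)) = 1 := by
      rw [← hr, hrw, map_add, adjoint_pullback]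
      ring
    rw [hr₁, pullback_mul, pullback_mul, pullback_mul, mapDomainRingHom_adjoint, ← ht,
      hf.map_pullback, mul_zero, map_zero, add_zero, add_assoc, add_eq_left] at hunit
    rw [map_add, hunit, map_zero]
  refine ⟨w * adjoint t, ?_, ?_⟩
  · rw [map_mul, adjoint_adjoint]
    rw [← add_self_eq_zero (adjoint w * t)] at hsymm
    exact (add_right_cancel hsymm).symm
  · rw [mul_assoc, mul_comm _ t, htt, mul_one, hrw]

theorem single_mul_eq_add_pullback (hf : IsTwoToOne f h) {r r₁ : (ZMod 2)[G]} {v : (ZMod 2)[H]}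
    (hr : r = r₁ + pullback f (v * mapDomainRingHom (ZMod 2) f r₁)) :
    single h 1 * r = r₁ + pullback f ((1 + v) * mapDomainRingHom (ZMod 2) f r₁) := by
  have hdouble : (1 + single h 1) * r = pullback f (mapDomainRingHom (ZMod 2) f r₁) := by
    rw [← hf.pullback_map, hr, map_add, hf.map_pullback, add_zero]
  have hsplit : single h 1 * r = r + (1 + single h 1) * r := by
    rw [one_add_mul, ← add_assoc, add_self_eq_zero, zero_add]
  rw [hsplit, hdouble, hr, one_add_mul, map_add]
  abel

theorem weight_map_add_autocorrelation [DecidableEq G] (hf : IsTwoToOne f h) (a : (ZMod 2)[G]) :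
    weight (mapDomainRingHom (ZMod 2) f a) + autocorrelation a.coeff.support h = weight a := by
  have hinter : a.coeff.support ∩ (single h 1 * a).coeff.support =
      {g ∈ a.coeff.support | g - h ∈ a.coeff.support} := by
    ext g
    simp [coeff_single_mul_apply, neg_add_eq_sub]
  have hadd := weight_add a (single h 1 * a)
  rw [← one_add_mul, ← hf.pullback_map, weight_pullback hf.surjective, hf.card_ker,
    weight_single_mul, hinter, ← autocorrelation] at hadd
  lia

end IsTwoToOne

variable [Finite G]

theorem even_autocorrelation [DecidableEq G] {r : (ZMod 2)[G]} (hr : IsUnitary r) {k : G}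
    (hk : k ≠ 0) : Even (autocorrelation r.coeff.support k) := by
  have := Fintype.ofFinite G
  have hsupport : r.coeff.support = ({g | r.coeff g ≠ 0} : Finset G) := by ext g; simp
  have hcoeff : (r * adjoint r).coeff k = autocorrelation r.coeff.support k := by
    simp only [coeff_mul_eq_sum, coeff_adjoint, neg_sub, hsupport, natCast_autocorrelation]
  rw [← ZMod.natCast_eq_zero_iff_even, ← hcoeff, hr, one_def, coeff_single,
    Finsupp.single_eq_of_ne hk]

theorem IsTwoToOne.weight_map_modEq {f : G →+ H} {h : G} (hf : IsTwoToOne f h)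
    (hneg : ∀ k : G, -k = k → k = 0 ∨ k = h) {r : (ZMod 2)[G]} (hr : IsUnitary r) :
    weight (mapDomainRingHom (ZMod 2) f r) ≡ 1 [MOD 4] := by
  classical
  have := Fintype.ofFinite G
  set S := r.coeff.support with hS
  have hself_neg : -h = h :=
    ((hf.map_eq_zero_iff (-h)).mp (by rw [map_neg, hf.map_self, neg_zero])).resolve_left
      (neg_ne_zero.mpr hf.ne_zero)
  have hsum : ∑ k with -k ≠ k, (autocorrelation S k : ZMod 4) = 0 := by
    refine sum_filter_neg_ne_eq_zero (fun k => by rw [autocorrelation_neg]) fun k hk => ?_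
    obtain ⟨m, hm⟩ := even_autocorrelation hr (k := k) (by rintro rfl; simp at hk)
    rw [← hS] at hm
    rw [hm]
    norm_cast
    exact (ZMod.natCast_eq_zero_iff _ _).mpr ⟨m, by ring⟩
  have hself : ({k | -k = k} : Finset G) = {0, h} := by
    ext k
    simpa using ⟨hneg k, by rintro (rfl | rfl) <;> simp [hself_neg]⟩
  have htotal : (#S + autocorrelation S h : ZMod 4) = #S ^ 2 := by
    have := congrArg (Nat.cast (R := ZMod 4)) (sum_autocorrelation S)
    rw [← sum_filter_add_sum_filter_not _ (fun k => -k = k), Nat.cast_add, Nat.cast_sum,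
      Nat.cast_sum, hsum, hself, sum_pair hf.ne_zero.symm, autocorrelation_zero] at this
    simpa using this
  have hodd : (weight r : ZMod 4) ^ 2 = 1 := by
    obtain ⟨m, hm⟩ := hr.odd_weight
    have (x : ZMod 4) : (2 * x + 1) ^ 2 = 1 := by revert x; decide
    rw [hm]
    exact_mod_cast this m
  have hfold : (weight (mapDomainRingHom (ZMod 2) f r) + autocorrelation S h : ZMod 4) = #S :=
    mod_cast congrArg (Nat.cast (R := ZMod 4)) (hf.weight_map_add_autocorrelation r)
  have harith (w x y : ZMod 4) : w + x = y → y + x = y ^ 2 → y ^ 2 = 1 → w = 1 := by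
    revert w x y; decide
  rw [← ZMod.natCast_eq_natCast_iff, Nat.cast_one]
  exact harith _ _ _ hfold htotal hodd

end TwoToOne

section BitMask

variable {n : ℕ} [NeZero n]

/-- The word of length `n` whose coordinates are the bits of `m`, least significant first; bits
from position `n` on are ignored. -/
noncomputable def word (n : ℕ) [NeZero n] (m : ℕ) : (ZMod 2)[ZMod n] :=
  ofCoeff (Finsupp.equivFunOnFinite.symm fun k => if m.testBit k.val then 1 else 0)

theorem coeff_word (m : ℕ) (k : ZMod n) :
    (word n m).coeff k = if m.testBit k.val then 1 else 0 :=
  rfl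

theorem coeff_word_natCast (m : ℕ) {i : ℕ} (hi : i < n) :
    (word n m).coeff (i : ZMod n) = if m.testBit i then 1 else 0 := by
  rw [coeff_word, ZMod.val_natCast_of_lt hi]

theorem word_ext {a : (ZMod 2)[ZMod n]} {m : ℕ}
    (h : ∀ i < n, a.coeff i = if m.testBit i then 1 else 0) : a = word n m := by
  ext k
  rw [coeff_word, ← h _ k.val_lt, ZMod.natCast_zmod_val]

theorem word_zero : word n 0 = 0 := by
  ext k
  simp [coeff_word]

theorem word_xor (a b : ℕ) : word n (a ^^^ b) = word n a + word n b := by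
  ext k
  simp only [coeff_word, Nat.testBit_xor, coeff_add, Finsupp.add_apply]
  cases a.testBit k.val <;> cases b.testBit k.val <;> decide

theorem word_eq_word {a b : ℕ} (h : (a ^^^ b) % 2 ^ n = 0) : word n a = word n b := by
  refine (word_ext fun i hi => ?_).symm
  have hbit := Nat.testBit_mod_two_pow (a ^^^ b) n i
  simp only [h, Nat.zero_testBit, hi, decide_true, Bool.true_and, Nat.testBit_xor] at hbit
  rw [coeff_word_natCast b hi, bne_eq_false_iff_eq.mp hbit.symm]

theorem word_two_pow (i : ℕ) (hi : i < n) : word n (2 ^ i) = single (i : ZMod n) 1 := by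
  refine (word_ext fun j hj => ?_).symm
  rw [coeff_single, Finsupp.single_apply, Nat.testBit_two_pow]
  congr 1
  rw [ZMod.natCast_eq_natCast_iff', Nat.mod_eq_of_lt hi, Nat.mod_eq_of_lt hj, decide_eq_true_eq]

theorem word_one : word n 1 = 1 := by
  rw [← pow_zero 2, word_two_pow 0 (NeZero.pos n), Nat.cast_zero, one_def]

/-- The exclusive or of the masks `w i` over the bits `i < k` of `m`. -/
def xorOverBits (w : ℕ → ℕ) (m : ℕ) : ℕ → ℕ
  | 0 => 0
  | k + 1 => bif m.testBit k then xorOverBits w m k ^^^ w k else xorOverBits w m k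

theorem word_xorOverBits (w : ℕ → ℕ) (m k : ℕ) :
    word n (xorOverBits w m k) = ∑ i ∈ range k, if m.testBit i then word n (w i) else 0 := by
  induction k with
  | zero => exact word_zero
  | succ k ih =>
    rw [sum_range_succ, ← ih, xorOverBits]
    cases m.testBit k
    · simp
    · simp [word_xor]

theorem word_eq_sum (m : ℕ) :
    word n m = ∑ i ∈ range n, if m.testBit i then single (i : ZMod n) 1 else 0 := by
  refine (word_ext fun j hj => ?_).symm
  have (i : ℕ) (hi : i ∈ range n) :
      (if m.testBit i then single (i : ZMod n) 1 else 0 : (ZMod 2)[ZMod n]).coeff j =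
        if i = j then if m.testBit j then 1 else 0 else 0 := by
    have hij : (i : ZMod n) = j ↔ i = j := by
      rw [ZMod.natCast_eq_natCast_iff', Nat.mod_eq_of_lt (mem_range.mp hi), Nat.mod_eq_of_lt hj]
    split_ifs <;> simp_all
  rw [coeff_sum, Finsupp.finsetSum_apply, sum_congr rfl this]
  simp [hj]

/-- The number of ones among the `n` lowest bits of `m`. -/
def popcount (m : ℕ) : ℕ → ℕ
  | 0 => 0
  | k + 1 => popcount m k + (m.testBit k).toNat

theorem popcount_eq_card (m k : ℕ) : popcount m k = #{i ∈ range k | m.testBit i} := by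
  induction k with
  | zero => rfl
  | succ k ih =>
    rw [popcount, ih, card_filter, card_filter, sum_range_succ]
    cases m.testBit k <;> rfl

theorem weight_word (m : ℕ) : weight (word n m) = popcount m n := by
  rw [popcount_eq_card]
  refine card_bij' (fun k _ => k.val) (fun i _ => (i : ZMod n)) ?_ ?_ ?_ ?_
  · simp +contextual [coeff_word, ZMod.val_lt]
  · simp +contextual [coeff_word, Nat.mod_eq_of_lt]
  · simp
  · simp +contextual [Nat.mod_eq_of_lt]

/-- Cyclic shift by `s` positions of the `n` lowest bits of `m`. -/
def rotate (n m s : ℕ) : ℕ := m <<< s ^^^ (m % 2 ^ n) >>> (n - s)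

theorem word_rotate (m : ℕ) {s : ℕ} (hs : s ≤ n) :
    word n (rotate n m s) = single (s : ZMod n) 1 * word n m := by
  refine (word_ext fun i hi => ?_).symm
  have hbit : (rotate n m s).testBit i = m.testBit (-(s : ZMod n) + i).val := by
    rw [rotate, Nat.testBit_xor, Nat.testBit_shiftLeft, Nat.testBit_shiftRight,
      Nat.testBit_mod_two_pow]
    obtain hsi | hsi := le_or_gt s i
    · rw [show -(s : ZMod n) + i = (i - s : ℕ) by push_cast [hsi]; ring,
        ZMod.val_natCast_of_lt (by lia)]
      simp [hsi, show ¬ n - s + i < n by lia]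
    · rw [show -(s : ZMod n) + i = (n - s + i : ℕ) by push_cast [hs]; simp,
        ZMod.val_natCast_of_lt (by lia)]
      simp [hsi.not_ge, show n - s + i < n by lia]
  rw [coeff_single_mul_apply, one_mul, coeff_word, hbit]

/-- The mask of the product of the words with masks `a` and `b`. -/
def multiply (n a b : ℕ) : ℕ := xorOverBits (rotate n b) a n

theorem word_multiply (a b : ℕ) : word n (multiply n a b) = word n a * word n b := by
  rw [multiply, word_xorOverBits, word_eq_sum a, sum_mul]
  refine sum_congr rfl fun i hi => ?_
  split_ifs
  · exact word_rotate b (mem_range.mp hi).le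
  · rw [zero_mul]

/-- The mask of the image of the word with mask `m` under multiplication of positions by `u`. -/
def scale (n u m : ℕ) : ℕ := xorOverBits (fun i => 2 ^ (u * i % n)) m n

theorem word_scale (u m : ℕ) :
    word n (scale n u m) =
      mapDomainRingHom (ZMod 2) (AddMonoidHom.mulLeft (u : ZMod n)) (word n m) := by
  rw [scale, word_xorOverBits, word_eq_sum m, map_sum]
  refine sum_congr rfl fun i _ => ?_
  split_ifs
  · rw [word_two_pow _ (Nat.mod_lt _ (NeZero.pos n)), mapDomainRingHom_apply, mapDomain_single]
    simp
  · rw [map_zero]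

end BitMask

section Halving

/-- Reduction modulo `h` of the residues modulo `2 * h`. -/
def halve (h : ℕ) : ZMod (2 * h) →+ ZMod h :=
  (ZMod.castHom (Nat.dvd_mul_left h 2) (ZMod h) : ZMod (2 * h) →+* ZMod h)

theorem halve_natCast {h : ℕ} (i : ℕ) : halve h i = i :=
  map_natCast (ZMod.castHom (Nat.dvd_mul_left h 2) (ZMod h)) i

variable {h : ℕ} [NeZero h]

theorem isTwoToOne_halve : IsTwoToOne (halve h) (h : ZMod (2 * h)) where
  surjective := ZMod.castHom_surjective (Nat.dvd_mul_left h 2)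
  ne_zero := by
    rw [Ne, ZMod.natCast_eq_zero_iff]
    exact Nat.not_dvd_of_pos_of_lt (NeZero.pos h) (by have := NeZero.pos h; lia)
  map_eq_zero_iff g := by
    obtain ⟨i, hi, rfl⟩ : ∃ i < 2 * h, (i : ZMod (2 * h)) = g :=
      ⟨g.val, g.val_lt, ZMod.natCast_zmod_val g⟩
    have hpos := NeZero.pos h
    rw [halve_natCast, ZMod.natCast_eq_zero_iff, ZMod.natCast_eq_zero_iff,
      ZMod.natCast_eq_natCast_iff', Nat.mod_eq_of_lt hi, Nat.mod_eq_of_lt (by lia : h < 2 * h)]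
    constructor
    · rintro ⟨k, rfl⟩
      have : k < 2 := by nlinarith
      interval_cases k <;> simp
    · rintro (⟨k, rfl⟩ | rfl)
      exacts [⟨2 * k, by ring⟩, dvd_rfl]

theorem eq_zero_or_eq_of_neg_eq {k : ZMod (2 * h)} (hk : -k = k) : k = 0 ∨ k = h := by
  refine (ZMod.neg_eq_self_iff k).mp hk |>.imp_right fun hval => ?_
  rw [← ZMod.natCast_zmod_val k, Nat.eq_of_mul_eq_mul_left two_pos hval]

theorem map_halve_word (m : ℕ) :
    mapDomainRingHom (ZMod 2) (halve h) (word (2 * h) m) = word h (m ^^^ m >>> h) := by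
  refine word_ext fun i hi => ?_
  have hfold := congrArg (fun a : (ZMod 2)[ZMod (2 * h)] => a.coeff (i : ZMod (2 * h)))
    (isTwoToOne_halve.pullback_map (word (2 * h) m))
  have hshift : (-(h : ZMod (2 * h)) + i) = (i + h : ℕ) := by
    have : (2 * h : ZMod (2 * h)) = 0 := by exact_mod_cast ZMod.natCast_self (2 * h)
    push_cast
    linear_combination -this
  simp only [coeff_pullback, halve_natCast, one_add_mul, coeff_add, Finsupp.add_apply,
    coeff_single_mul_apply, one_mul, coeff_word, hshift, ZMod.val_natCast_of_lt
    (show i < 2 * h by lia), ZMod.val_natCast_of_lt (show i + h < 2 * h by lia)] at hfold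
  rw [hfold, Nat.testBit_xor, Nat.testBit_shiftRight, add_comm h i]
  cases m.testBit i <;> cases m.testBit (i + h) <;> decide

/-- Two consecutive copies of the `h` lowest bits of `m`. -/
def duplicate (h m : ℕ) : ℕ := m % 2 ^ h ^^^ (m % 2 ^ h) <<< h

theorem pullback_halve_word (m : ℕ) :
    pullback (halve h) (word h m) = word (2 * h) (duplicate h m) := by
  refine word_ext fun i hi => ?_
  rw [coeff_pullback, halve_natCast, coeff_word, ZMod.val_natCast, duplicate, Nat.testBit_xor,
    Nat.testBit_shiftLeft, Nat.testBit_mod_two_pow, Nat.testBit_mod_two_pow]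
  obtain hih | hih := lt_or_ge i h
  · simp [hih, Nat.mod_eq_of_lt, hih.not_ge]
  · simp [hih, hih.not_gt, Nat.mod_eq_sub_mod hih, Nat.mod_eq_of_lt, show i - h < h by lia]

end Halving

section Equivalence

variable {n : ℕ}

/-- Elements of the group algebra of `ZMod n` that differ by an automorphism of `ZMod n` and a
translation; they generate equivalent double circulant codes. -/
def IsEquivalent (r r' : (ZMod 2)[ZMod n]) : Prop :=
  ∃ (u : (ZMod n)ˣ) (s : ZMod n),
    r' = single s 1 * mapDomainRingHom (ZMod 2) (AddMonoidHom.mulLeft (u : ZMod n)) r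

namespace IsEquivalent

variable {r r' r'' : (ZMod 2)[ZMod n]}

theorem single_mul (s : ZMod n) (r : (ZMod 2)[ZMod n]) : IsEquivalent r (single s 1 * r) := by
  have hone : AddMonoidHom.mulLeft ((1 : (ZMod n)ˣ) : ZMod n) = .id _ := by ext; simp
  exact ⟨1, s, by rw [hone, mapDomainRingHom_id, RingHom.id_apply]⟩

theorem trans (h : IsEquivalent r r') (h' : IsEquivalent r' r'') : IsEquivalent r r'' := by
  obtain ⟨u, s, rfl⟩ := h
  obtain ⟨u', s', rfl⟩ := h'
  refine ⟨u' * u, s' + u' * s, ?_⟩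
  have hcomp : AddMonoidHom.mulLeft ((u' * u : (ZMod n)ˣ) : ZMod n) =
      (AddMonoidHom.mulLeft (u' : ZMod n)).comp (AddMonoidHom.mulLeft (u : ZMod n)) := by
    ext; simp [mul_assoc]
  rw [hcomp, mapDomainRingHom_comp, RingHom.comp_apply, map_mul, mapDomainRingHom_apply _ _
    (single s 1), mapDomain_single, ← mul_assoc, single_mul_single, mul_one]
  rfl

theorem hasOddFunctional [NeZero n] {c d : ℕ} (h : IsEquivalent r r')
    (hr : HasOddFunctional c d r) : HasOddFunctional c d r' := by
  obtain ⟨u, s, rfl⟩ := h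
  exact (hr.map_equiv (AddAut.mulLeft u)).single_mul s

theorem weight_eq (h : IsEquivalent r r') : weight r' = weight r := by
  obtain ⟨u, s, rfl⟩ := h
  rw [weight_single_mul]
  exact weight_mapDomainRingEquiv (AddAut.mulLeft u) r

theorem exists_lift {h : ℕ} [NeZero h] {r : (ZMod 2)[ZMod (2 * h)]} {t : (ZMod 2)[ZMod h]}
    (ht : IsEquivalent (mapDomainRingHom (ZMod 2) (halve h) r) t) :
    ∃ r', IsEquivalent r r' ∧ mapDomainRingHom (ZMod 2) (halve h) r' = t := by
  obtain ⟨u, s, rfl⟩ := ht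
  obtain ⟨u', rfl⟩ := ZMod.unitsMap_surjective (Nat.dvd_mul_left h 2) u
  obtain ⟨s', rfl⟩ := (isTwoToOne_halve (h := h)).surjective s
  refine ⟨_, ⟨u', s', rfl⟩, ?_⟩
  rw [map_mul, mapDomainRingHom_apply _ _ (single s' 1), mapDomain_single, ← RingHom.comp_apply,
    ← mapDomainRingHom_comp, ← RingHom.comp_apply, ← mapDomainRingHom_comp]
  congr 3
  ext k
  exact map_mul (ZMod.castHom (Nat.dvd_mul_left h 2) (ZMod h)) _ _

theorem of_weight_eq_one [NeZero n] (hr : weight r = 1) : IsEquivalent r (word n 1) := by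
  obtain ⟨s, hs⟩ := card_eq_one.mp hr
  have hrs : r = single s 1 := by
    ext k
    have hk : r.coeff k ≠ 0 ↔ k = s := by rw [← Finsupp.mem_support_iff, hs, mem_singleton]
    rw [coeff_single]
    obtain rfl | hne := eq_or_ne k s
    · rw [Finsupp.single_eq_same]
      exact (ne_zero_iff_eq_one _).mp (hk.mpr rfl)
    · rw [Finsupp.single_eq_of_ne hne]
      exact not_not.mp (mt hk.mp hne)
  have hword : word n 1 = single (-s) 1 * r := by
    rw [hrs, single_mul_single, neg_add_cancel, mul_one, word_one, one_def]
  exact hword ▸ single_mul (-s) r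

end IsEquivalent

end Equivalence

section Certificate

variable {n : ℕ} [NeZero n] {c d : ℕ}

/-- A decision tree over the elements `m + B₁ + ⋯ + Bₖ`, where each of the masks `Bᵢ` may be
present or absent: a branching decides on the first of the remaining masks, and a leaf shows that
every remaining choice is excluded or equivalent to a listed representative. -/
inductive Certificate
  /-- The weight of the element is excluded. -/
  | badWeight
  /-- The word with left half `a` is too light. -/
  | light (a : ℕ)
  /-- Light words `a` with multipliers `b` such that the products `b * a` sum to zero although the
  multipliers have odd total weight, where the pairs `(a, b)` are listed. -/
  | relation (l : List (ℕ × ℕ))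
  /-- Multiplication by `u` followed by translation by `s` gives a representative. -/
  | equivalent (s u : ℕ)
  /-- Branch on the absence or presence of the first remaining mask. -/
  | split (absent present : Certificate)

/-- Whether `a` is the left half of a light word for every choice of the masks `Bs`, which are all
annihilated by `a`. -/
def isLightMask (n c d m a : ℕ) (Bs : List ℕ) : Bool :=
  popcount a n != 0 && decide (c * (popcount a n + popcount (multiply n a m) n) ≤ d) &&
    Bs.all fun B => multiply n a B % 2 ^ n == 0

theorem word_ne_zero {a : ℕ} (ha : popcount a n ≠ 0) : word n a ≠ 0 := by
  rwa [← weight_word, Ne, weight_eq_zero] at ha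

theorem word_eq_zero {a : ℕ} (ha : a % 2 ^ n = 0) : word n a = 0 := by
  rw [← word_zero]
  exact word_eq_word (by rwa [Nat.xor_zero])

theorem word_mul_sum_eq_zero {a : ℕ} {Bs l : List ℕ}
    (ha : ∀ B ∈ Bs, multiply n a B % 2 ^ n = 0) (hl : l.Sublist Bs) :
    word n a * (l.map (word n)).sum = 0 := by
  rw [← List.sum_map_mul_left]
  refine List.sum_eq_zero fun x hx => ?_
  obtain ⟨B, hB, rfl⟩ := List.mem_map.mp hx
  rw [← word_multiply, word_eq_zero (ha B (hl.subset hB))]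

theorem weight_word_mul_add_sum {a : ℕ} {Bs l : List ℕ} (m : ℕ)
    (ha : ∀ B ∈ Bs, multiply n a B % 2 ^ n = 0) (hl : l.Sublist Bs) :
    weight (word n a * (word n m + (l.map (word n)).sum)) = popcount (multiply n a m) n := by
  rw [mul_add, word_mul_sum_eq_zero ha hl, add_zero, ← word_multiply, weight_word]

theorem isLight_of_isLightMask {m a : ℕ} {Bs l : List ℕ}
    (ha : isLightMask n c d m a Bs = true) (hl : l.Sublist Bs) :
    IsLight c d (word n m + (l.map (word n)).sum) (word n a) := by
  simp only [isLightMask, Bool.and_eq_true, bne_iff_ne, decide_eq_true_eq, List.all_eq_true,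
    beq_iff_eq] at ha
  rw [IsLight, weight_word_mul_add_sum m ha.2 hl, weight_word]
  exact ⟨word_ne_zero ha.1.1, ha.1.2⟩

namespace Certificate

/-- Whether a decision tree is valid for the element with mask `m` and the remaining masks; `p`
tells which weights are admissible, and `reps` are the representatives. -/
def check (n c d : ℕ) (p : ℕ → Bool) (reps : List ℕ) : Certificate → ℕ → List ℕ → Bool
  | badWeight, m, [] => !p (popcount m n)
  | light a, m, Bs =>
    isLightMask n c d m a Bs && c * (popcount a n + popcount (multiply n a m) n) != d
  | relation l, m, Bs =>
    (l.all fun x => isLightMask n c d m x.1 Bs) &&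
      (l.foldr (fun x acc => multiply n x.2 x.1 ^^^ acc) 0) % 2 ^ n == 0 &&
      (l.map fun x => popcount x.2 n).sum % 2 == 1
  | equivalent s u, m, [] =>
    n.Coprime u && decide (s ≤ n) && reps.any fun t => (rotate n (scale n u m) s ^^^ t) % 2 ^ n == 0
  | split c₀ c₁, m, B :: Bs => c₀.check n c d p reps m Bs && c₁.check n c d p reps (m ^^^ B) Bs
  | _, _, _ => false

variable {p : ℕ → Bool} {reps : List ℕ} {m : ℕ} {Bs l : List ℕ}

theorem not_hasOddFunctional_of_light {a : ℕ} (hcheck : (light a).check n c d p reps m Bs = true)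
    (hl : l.Sublist Bs) : ¬ HasOddFunctional c d (word n m + (l.map (word n)).sum) := by
  intro h
  simp only [check, Bool.and_eq_true, bne_iff_ne] at hcheck
  have hlight := isLight_of_isLightMask hcheck.1 hl
  have hann := List.all_eq_true.mp (Bool.and_eq_true_iff.mp hcheck.1).2
  have heq := h.weight_eq _ hlight
  rw [weight_word, weight_word_mul_add_sum m (by simpa using hann) hl] at heq
  exact hcheck.2 heq

theorem word_foldr_multiply (x : List (ℕ × ℕ)) :
    word n (x.foldr (fun y acc => multiply n y.2 y.1 ^^^ acc) 0) =
      (x.map fun y => word n y.2 * word n y.1).sum := by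
  induction x with
  | nil => exact word_zero
  | cons y x ih => rw [List.foldr_cons, word_xor, word_multiply, ih, List.map_cons, List.sum_cons]

theorem not_hasOddFunctional_of_relation {x : List (ℕ × ℕ)}
    (hcheck : (relation x).check n c d p reps m Bs = true) (hl : l.Sublist Bs) :
    ¬ HasOddFunctional c d (word n m + (l.map (word n)).sum) := by
  intro h
  simp only [check, Bool.and_eq_true, List.all_eq_true, beq_iff_eq] at hcheck
  obtain ⟨⟨hlight, hzero⟩, hodd⟩ := hcheck
  have hsum := h.sum_augmentation_eq_zero
    (l := x.map fun y => (word n y.1, word n y.2)) ?_ ?_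
  · simp only [List.map_map, Function.comp_def, augmentation_eq_weight, weight_word] at hsum
    have hcast : (((x.map fun y => popcount y.2 n).sum : ℕ) : ZMod 2) = 0 := by
      rw [← hsum, Nat.cast_list_sum, List.map_map]
      rfl
    rw [ZMod.natCast_eq_zero_iff] at hcast
    lia
  · simp only [List.forall_mem_map]
    exact fun y hy => isLight_of_isLightMask (hlight y hy) hl
  · rw [List.map_map, ← word_eq_zero hzero, word_foldr_multiply]
    rfl

theorem exists_of_equivalent {s u : ℕ}
    (hcheck : (equivalent s u).check n c d p reps m [] = true) :
    ∃ t ∈ reps, IsEquivalent (word n m) (word n t) := by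
  simp only [check, Bool.and_eq_true, decide_eq_true_eq, List.any_eq_true, beq_iff_eq] at hcheck
  obtain ⟨⟨hu, hs⟩, t, ht, heq⟩ := hcheck
  refine ⟨t, ht, ZMod.unitOfCoprime u (Nat.Coprime.symm hu), s, ?_⟩
  rw [← word_eq_word heq, word_rotate _ hs, word_scale]
  rfl

theorem exists_isEquivalent_of_check {cert : Certificate}
    (hcheck : cert.check n c d p reps m Bs = true) (hl : l.Sublist Bs)
    (h : HasOddFunctional c d (word n m + (l.map (word n)).sum))
    (hp : p (weight (word n m + (l.map (word n)).sum)) = true) :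
    ∃ t ∈ reps, IsEquivalent (word n m + (l.map (word n)).sum) (word n t) := by
  induction cert generalizing m Bs l with
  | badWeight =>
    obtain _ | _ := Bs
    · simp only [List.sublist_nil.mp hl, List.map_nil, List.sum_nil, add_zero, weight_word] at hp
      simp [check, hp] at hcheck
    · simp [check] at hcheck
  | light a => exact absurd h (not_hasOddFunctional_of_light hcheck hl)
  | relation x => exact absurd h (not_hasOddFunctional_of_relation hcheck hl)
  | equivalent s u =>
    obtain _ | _ := Bs
    · rw [List.sublist_nil.mp hl, List.map_nil, List.sum_nil, add_zero]
      exact exists_of_equivalent hcheck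
    · simp [check] at hcheck
  | split c₀ c₁ ih₀ ih₁ =>
    obtain _ | ⟨B, Bs⟩ := Bs
    · simp [check] at hcheck
    rw [check, Bool.and_eq_true] at hcheck
    obtain hl | ⟨l', rfl, hl'⟩ := List.sublist_cons_iff.mp hl
    · exact ih₀ hcheck.1 hl h hp
    · rw [List.map_cons, List.sum_cons, ← add_assoc, ← word_xor] at h hp ⊢
      exact ih₁ hcheck.2 hl' h hp

end Certificate

end Certificate

section SymmetricWords

variable {h : ℕ} [NeZero h]

/-- Whether the masks `gs` represent symmetric words of length `h` in echelon form: the leading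
bits among the positions up to `h / 2` are `gs.length, …, 2, 1`. Together with the unit element,
`h / 2` such words span all symmetric words. -/
def isSymmetricEchelon (h : ℕ) : List ℕ → Bool
  | [] => true
  | g :: gs =>
    (scale h (h - 1) g ^^^ g) % 2 ^ h == 0 && g.testBit (gs.length + 1) &&
      ((List.range (h / 2 + 1)).all fun i => i ≤ gs.length + 1 || !g.testBit i) &&
      isSymmetricEchelon h gs

theorem word_scale_neg_one (m : ℕ) : word h (scale h (h - 1) m) = adjoint (word h m) := by
  have hneg : AddMonoidHom.mulLeft ((h - 1 : ℕ) : ZMod h) = negAddMonoidHom := by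
    ext
    simp [Nat.cast_sub NeZero.one_le]
  rw [word_scale, hneg, adjoint]

theorem eq_zero_of_adjoint_eq_self {v : (ZMod 2)[ZMod h]} (hv : adjoint v = v)
    (hzero : ∀ i ≤ h / 2, v.coeff (i : ZMod h) = 0) : v = 0 := by
  ext k
  obtain hk | hk := le_or_gt k.val (h / 2)
  · rw [← ZMod.natCast_zmod_val k, hzero _ hk]
    rfl
  · rw [← hv, coeff_adjoint, ← ZMod.natCast_zmod_val (-k), hzero]
    · rfl
    · have hne : k ≠ 0 := by rintro rfl; simp at hk
      have := NeZero.mk hne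
      rw [ZMod.val_neg_of_ne_zero]
      lia

theorem eq_zero_or_one_add_eq_zero {v : (ZMod 2)[ZMod h]} (hv : adjoint v = v)
    (hzero : ∀ i ≤ h / 2, 0 < i → v.coeff (i : ZMod h) = 0) : v = 0 ∨ 1 + v = 0 := by
  refine (eq_zero_or_one (v.coeff 0)).imp (fun hv₀ => eq_zero_of_adjoint_eq_self hv ?_)
    fun hv₀ => eq_zero_of_adjoint_eq_self (by rw [map_add, hv, map_one]) ?_
  all_goals
    intro i hi
    obtain rfl | hpos := i.eq_zero_or_pos
  · rwa [Nat.cast_zero]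
  · exact hzero i hi hpos
  · rw [Nat.cast_zero, coeff_add, Finsupp.add_apply, hv₀, one_def, coeff_single,
      Finsupp.single_eq_same]
    decide
  · have := NeZero.pos h
    rw [coeff_add, Finsupp.add_apply, hzero i hi hpos, ← word_one, coeff_word_natCast 1 (by lia),
      if_neg (mt Nat.testBit_one_eq_true_iff_self_eq_zero.mp hpos.ne')]
    decide

theorem coeff_word_add_eq_zero {g k : ℕ} {v : (ZMod 2)[ZMod h]} (hg : g.testBit (k + 1) = true)
    (hghigh : ∀ i ≤ h / 2, k + 1 < i → g.testBit i = false)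
    (hv : v.coeff ((k + 1 : ℕ) : ZMod h) ≠ 0)
    (hvhigh : ∀ i ≤ h / 2, k + 1 < i → v.coeff (i : ZMod h) = 0) {i : ℕ} (hi : i ≤ h / 2)
    (hki : k < i) : (word h g + v).coeff (i : ZMod h) = 0 := by
  have hpos := NeZero.pos h
  rw [coeff_add, Finsupp.add_apply, coeff_word_natCast g (by lia)]
  obtain rfl | hlt := (Nat.succ_le_of_lt hki).eq_or_lt
  · rw [hg, (ne_zero_iff_eq_one _).mp hv]
    decide
  · rw [hghigh i hi hlt, hvhigh i hi hlt]
    decide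

theorem exists_sublist_sum_eq {gs : List ℕ} (hgs : isSymmetricEchelon h gs = true)
    {v : (ZMod 2)[ZMod h]} (hv : adjoint v = v)
    (hzero : ∀ i ≤ h / 2, gs.length < i → v.coeff (i : ZMod h) = 0) :
    ∃ l : List ℕ, l.Sublist gs ∧ (v = (l.map (word h)).sum ∨ 1 + v = (l.map (word h)).sum) := by
  induction gs generalizing v with
  | nil =>
    exact ⟨[], .refl _, eq_zero_or_one_add_eq_zero hv fun i hi hpos => hzero i hi hpos⟩
  | cons g gs ih =>
    simp only [isSymmetricEchelon, Bool.and_eq_true, beq_iff_eq, Bool.not_eq_true',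
      List.all_eq_true, List.mem_range, Bool.or_eq_true, decide_eq_true_eq] at hgs
    obtain ⟨⟨⟨hsymm, hlead⟩, hhigh⟩, hgs⟩ := hgs
    by_cases hsmall : ∀ i ≤ h / 2, gs.length < i → v.coeff (i : ZMod h) = 0
    · obtain ⟨l, hl, hsum⟩ := ih hgs hv hsmall
      exact ⟨l, hl.cons g, hsum⟩
    push Not at hsmall
    obtain ⟨j, hj, hjlen, hvj⟩ := hsmall
    obtain rfl : j = gs.length + 1 := by
      by_contra hne
      exact hvj (hzero j hj (by rw [List.length_cons]; lia))
    have hsymm' : adjoint (word h g + v) = word h g + v := by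
      rw [map_add, hv, ← word_scale_neg_one, word_eq_word hsymm]
    obtain ⟨l, hl, hsum⟩ := ih hgs hsymm' fun i hi =>
      coeff_word_add_eq_zero hlead (fun i hi hlt => (hhigh i (by lia)).resolve_left (by lia)) hvj
        hzero hi
    have hcancel (w : (ZMod 2)[ZMod h]) : word h g + (word h g + w) = w := by
      rw [← add_assoc, add_self_eq_zero, zero_add]
    refine ⟨g :: l, hl.cons_cons g, ?_⟩
    rw [List.map_cons, List.sum_cons]
    refine hsum.imp (fun heq => ?_) fun heq => ?_
    · rw [← heq, hcancel]
    · rw [← heq, add_left_comm 1, hcancel]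

end SymmetricWords

section Lifting

/-- The data deciding the lifts to length `2 * h` of the element of length `h` with mask `fold`:
one lift, symmetric words of length `h` spanning all of them modulo the unit element, and a
decision tree over the sums of the lift and products of basis elements with `fold`. -/
structure Branch where
  /-- The element to be lifted. -/
  fold : ℕ
  /-- A unitary lift. -/
  lift : ℕ
  /-- The basis, in the order of decreasing leading positions. -/
  basis : List ℕ
  /-- The decision tree. -/
  certificate : Certificate

namespace Branch

/-- The generators of the differences between the lift and all other unitary lifts, the first one
belonging to the last element of the basis. -/
def differences (h : ℕ) (b : Branch) : List ℕ :=
  (b.basis.map fun g => duplicate h (multiply h g b.fold)).reverse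

/-- Whether the data are correct, and every lift admissible for `p` is excluded or equivalent to
one of the representatives `reps`. -/
def check (h c d : ℕ) (p : ℕ → Bool) (reps : List ℕ) (b : Branch) : Bool :=
  (multiply (2 * h) b.lift (scale (2 * h) (2 * h - 1) b.lift) ^^^ 1) % 2 ^ (2 * h) == 0 &&
    (b.lift ^^^ b.lift >>> h ^^^ b.fold) % 2 ^ h == 0 && b.basis.length == h / 2 &&
    isSymmetricEchelon h b.basis &&
    b.certificate.check (2 * h) c d p reps b.lift (b.differences h)

variable {h c d : ℕ} [NeZero h] {p : ℕ → Bool} {reps : List ℕ} {b : Branch}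

theorem isUnitary_lift (hb : b.check h c d p reps = true) : IsUnitary (word (2 * h) b.lift) := by
  simp only [check, Bool.and_eq_true, beq_iff_eq] at hb
  rw [IsUnitary, ← word_scale_neg_one, ← word_multiply, word_eq_word hb.1.1.1.1,
    word_one]

theorem map_halve_lift (hb : b.check h c d p reps = true) :
    mapDomainRingHom (ZMod 2) (halve h) (word (2 * h) b.lift) = word h b.fold := by
  simp only [check, Bool.and_eq_true, beq_iff_eq] at hb
  rw [map_halve_word, word_eq_word hb.1.1.1.2]

theorem pullback_sum_mul_fold (l : List ℕ) :
    pullback (halve h) ((l.map (word h)).sum * word h b.fold) =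
      ((l.map fun g => duplicate h (multiply h g b.fold)).reverse.map (word (2 * h))).sum := by
  rw [List.map_reverse, List.sum_reverse, List.map_map, ← List.sum_map_mul_right, map_list_sum,
    List.map_map]
  congr 1
  refine List.map_congr_left fun g _ => ?_
  simp only [Function.comp_apply, ← word_multiply, pullback_halve_word]

theorem exists_single_mul_eq (hb : b.check h c d p reps = true) {r : (ZMod 2)[ZMod (2 * h)]}
    (hr : IsUnitary r) (hmap : mapDomainRingHom (ZMod 2) (halve h) r = word h b.fold) :
    ∃ (s : ZMod (2 * h)) (l : List ℕ), l.Sublist (b.differences h) ∧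
      single s 1 * r = word (2 * h) b.lift + (l.map (word (2 * h))).sum := by
  have hf := isTwoToOne_halve (h := h)
  obtain ⟨v, hv, hrv⟩ := hf.exists_eq_add_pullback hr (isUnitary_lift hb)
    (by rw [hmap, map_halve_lift hb])
  have hrv' := hf.single_mul_eq_add_pullback hrv
  rw [map_halve_lift hb] at hrv hrv'
  simp only [check, Bool.and_eq_true, beq_iff_eq] at hb
  obtain ⟨l, hl, hsum⟩ := exists_sublist_sum_eq hb.1.2 hv fun i hi hlen => by lia
  have hsub := (hl.map fun g => duplicate h (multiply h g b.fold)).reverse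
  obtain hsum | hsum := hsum
  · refine ⟨0, _, hsub, ?_⟩
    rw [← one_def, one_mul, hrv, hsum, pullback_sum_mul_fold]
  · refine ⟨h, _, hsub, ?_⟩
    rw [hrv', hsum, pullback_sum_mul_fold]

theorem exists_isEquivalent (hb : b.check h c d p reps = true) {r : (ZMod 2)[ZMod (2 * h)]}
    (hr : HasOddFunctional c d r) (hp : p (weight r) = true)
    (hmap : mapDomainRingHom (ZMod 2) (halve h) r = word h b.fold) :
    ∃ t ∈ reps, IsEquivalent r (word (2 * h) t) := by
  obtain ⟨s, l, hl, hsl⟩ := exists_single_mul_eq hb hr.isUnitary hmap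
  have hodd := hr.single_mul s
  rw [← weight_single_mul s, hsl] at hp
  rw [hsl] at hodd
  obtain ⟨t, ht, hequiv⟩ := Certificate.exists_isEquivalent_of_check
    (Bool.and_eq_true_iff.mp hb).2 hl hodd hp
  exact ⟨t, ht, (IsEquivalent.single_mul s r).trans (hsl ▸ hequiv)⟩

end Branch

end Lifting

section Covers

/-- Up to equivalence, the elements of the group algebra of `ZMod n` that have odd functionals and
a weight admissible for `p` are among those with masks in `L`. -/
def Covers (n c d : ℕ) [NeZero n] (p : ℕ → Bool) (L : List ℕ) : Prop :=
  ∀ r : (ZMod 2)[ZMod n], HasOddFunctional c d r → p (weight r) = true →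
    ∃ t ∈ L, IsEquivalent r (word n t)

theorem Covers.lift {h c d : ℕ} [NeZero h] {p : ℕ → Bool} {branches : List Branch}
    (hcov : Covers h (c * 2) d (· % 4 == 1) (branches.map Branch.fold)) {reps : List ℕ}
    (hcheck : branches.all (Branch.check h c d p reps) = true) : Covers (2 * h) c d p reps := by
  intro r hr hp
  have hf := isTwoToOne_halve (h := h)
  have hodd := hr.map hf.surjective
  rw [hf.card_ker] at hodd
  have hmod := hf.weight_map_modEq (fun k => eq_zero_or_eq_of_neg_eq) hr.isUnitary
  obtain ⟨t, ht, hequiv⟩ := hcov _ hodd (beq_iff_eq.mpr hmod)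
  obtain ⟨b, hb, rfl⟩ := List.mem_map.mp ht
  obtain ⟨r', hr', hmap⟩ := IsEquivalent.exists_lift hequiv
  obtain ⟨t, ht, ht'⟩ := Branch.exists_isEquivalent (List.all_eq_true.mp hcheck b hb)
    (hr'.hasOddFunctional hr) (hr'.weight_eq ▸ hp) hmap
  exact ⟨t, ht, hr'.trans ht'⟩

theorem covers_three : Covers 3 16 16 (· % 4 == 1) [1] := by
  intro r _ hweight
  have hle : weight r ≤ 3 := (card_le_univ _).trans_eq (ZMod.card 3)
  rw [beq_iff_eq] at hweight
  exact ⟨1, List.mem_singleton_self 1, .of_weight_eq_one (by lia)⟩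

end Covers

section Search

/-- Certificates for the lifts to length 6 of the elements of length 3. -/
def branchesSix : List Branch :=
  [{ fold := 1, lift := 1, basis := [6],
     certificate :=
       .split (.equivalent 0 1) (.equivalent 0 1) }]

/-- Certificates for the lifts to length 12. -/
def branchesTwelve : List Branch :=
  [{ fold := 1, lift := 1, basis := [8, 0x14, 0x22],
     certificate :=
       .split (.split (.split (.light 1) .badWeight) (.split (.relation [(0x11, 0x111)])
       .badWeight)) (.split (.split (.equivalent 0 1) .badWeight) (.split (.relation [(9, 0x3f),
       (0x41, 7)]) .badWeight)) },
   { fold := 0x37, lift := 0x133, basis := [8, 0x14, 0x22],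
     certificate :=
       .split (.split (.split (.relation [(0x11, 0x111)]) .badWeight) (.split
       (.relation [(0x11, 0x111)]) .badWeight)) (.split (.split (.equivalent 0 1) .badWeight)
       (.split (.equivalent 0 7) .badWeight)) }]

/-- Certificates for the lifts to length 24. -/
def branchesTwentyFour : List Branch :=
  [{ fold := 0x8a3, lift := 0x48a7, basis := [0x40, 0xa0, 0x110, 0x208, 0x404, 0x802],
     certificate :=
       .split (.split (.split (.split (.split (.split .badWeight (.relation [(0x921, 0x155d),
       (0x4029, 0x2f5)])) (.split .badWeight (.light 0x10101))) (.split (.split .badWeight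
       (.relation [(0x47, 0x47), (0xc9, 0x3d)])) (.split .badWeight (.light 0x10101)))) (.split
       (.split (.split .badWeight (.light 0x83)) (.split .badWeight (.relation [(0x1821, 0x15015),
       (0x41041, 0x7f5)]))) (.split (.split .badWeight (.light 0x10101)) (.split .badWeight
       (.light 0x43))))) (.split (.split (.split (.split .badWeight (.relation [(0x849, 0x1755),
       (0x4a01, 0x2bd)])) (.split .badWeight (.light 0x10101))) (.split (.split .badWeight
       (.relation [(0x71, 0x71), (0x93, 0x2f)])) (.split .badWeight (.light 0x10101)))) (.split
       (.split (.split .badWeight (.light 0xc1)) (.split .badWeight (.relation [(0x1083, 0x15015),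
       (0x41041, 0x57f)]))) (.split (.split .badWeight (.light 0x10101)) (.split .badWeight
       (.light 0x61)))))) (.split (.split (.split (.split (.split .badWeight (.light 0x10101))
       (.split .badWeight (.relation [(0x2043, 0x157), (0x40b, 0xabf)]))) (.split (.split
       .badWeight (.light 0x10101)) (.split .badWeight (.relation [(0x431, 0x107f),
       (0x3081, 0x3ef)])))) (.split (.split (.split .badWeight (.relation [(0x309, 0x15015),
       (0x41041, 0xfd)])) (.split .badWeight (.light 0x841))) (.split (.split .badWeight
       (.light 0x2041)) (.split .badWeight (.light 0x10101))))) (.split (.split (.split (.split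
       .badWeight (.light 0x10101)) (.split .badWeight (.relation [(0x3081, 0x1d5),
       (0x681, 0xfd5)]))) (.split (.split .badWeight (.light 0x10101)) (.split .badWeight
       (.relation [(0x461, 0x1fc1), (0x2043, 0x3df)])))) (.split (.split (.split .badWeight
       (.relation [(0x243, 0x15015), (0x41041, 0xbf)])) (.split .badWeight (.light 0x821))) (.split
       (.split .badWeight (.light 0x2081)) (.split .badWeight (.light 0x10101)))))) },
   { fold := 0x427, lift := 0x8b4ac, basis := [0x40, 0xa0, 0x110, 0x208, 0x404, 0x802],
     certificate :=
       .split (.split (.split (.split (.split (.split (.light 0x10101) .badWeight) (.split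
       (.light 0x23) .badWeight)) (.split (.split (.light 0x281) .badWeight) (.split
       (.relation [(0x903, 0xaf), (0x213, 0x2ff)]) .badWeight))) (.split (.split (.split
       (.relation [(0x6011, 0x6f), (0xb1, 0x200f)]) .badWeight) (.split (.light 0x10101)
       .badWeight)) (.split (.split (.equivalent 0 1) .badWeight) (.split (.light 0x10101)
       .badWeight)))) (.split (.split (.split (.split (.light 0x2401) .badWeight) (.split
       (.light 0x811) .badWeight)) (.split (.split (.light 0x10101) .badWeight) (.split
       (.relation [(0x10b, 0x2855), (0x8901, 0x57)]) .badWeight))) (.split (.split (.split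
       (.equivalent 0 5) .badWeight) (.split (.light 0x10101) .badWeight)) (.split (.split
       (.relation [(0xa9, 0x21ff), (0x6201, 0x67)]) .badWeight) (.split (.light 0x10101)
       .badWeight))))) (.split (.split (.split (.split (.split (.relation [(0x4203, 0x2855),
       (0x8901, 0x15ff)]) .badWeight) (.split (.light 0x25) .badWeight)) (.split (.split
       (.light 0x409) .badWeight) (.split (.light 0x10101) .badWeight))) (.split (.split (.split
       (.light 0x10101) .badWeight) (.split (.equivalent 0 13) .badWeight)) (.split (.split
       (.light 0x10101) .badWeight) (.split (.relation [(0x4013, 0x1fd), (0x207, 0x3ff1)])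
       .badWeight)))) (.split (.split (.split (.split (.relation [(0xa101, 0xaf), (0x213, 0x2055)])
       .badWeight) (.split (.light 0x10101) .badWeight)) (.split (.split (.light 0xd) .badWeight)
       (.split (.light 0x403) .badWeight))) (.split (.split (.split (.light 0x10101) .badWeight)
       (.split (.relation [(0x215, 0x47f), (0xc81, 0x1f3)]) .badWeight)) (.split (.split
       (.light 0x10101) .badWeight) (.split (.equivalent 0 17) .badWeight))))) }]

/-- Certificates excluding all lifts to length 48. -/
def branchesFortyEight : List Branch :=
  [{ fold := 0xa03e24, lift := 0x1b9a03f9d,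
     basis := [0x111111, 0xaaaaaa, 0x444444, 0x828282, 0x10101, 0xb600db, 0x140051, 0xb8003b,
       0x100011, 0x60000d, 0x400005, 0x800003],
     certificate :=
       .split (.split (.split (.split (.split (.split (.split (.light 0x204010403)
       (.relation [(0x4201010143, 0x100010001)])) (.split (.relation [(0x8a108a1, 0x100010001)])
       (.split (.split (.relation [(0x800899, 0x880019d5), (0x808018485, 0x88809)])
       (.relation [(0x10025035, 0x880019d5), (0x808018485, 0x1113665)])) (.split
       (.relation [(0x1001, 0x880019d5), (0x808018485, 0x111)]) (.relation [(0x133001, 0x880019d5),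
       (0x808018485, 0x12111)]))))) (.split (.split (.relation [(0x410031007, 0x100010001)])
       (.relation [(0x1b000b001, 0x100010001)])) (.split (.relation [(0x58015801, 0x100010001)])
       (.relation [(0x58015801, 0x100010001)])))) (.split (.split (.split
       (.relation [(0x804110419, 0x100010001)]) (.relation [(0x944004409, 0x100010001)])) (.split
       (.relation [(0x2040114031, 0x100010001)]) (.split (.split (.relation [(0x1001, 0x1111ab1),
       (0x1000b1a1, 0x111)]) (.relation [(0x40401001, 0x1111ab1), (0x1000b1a1, 0x4400111)]))
       (.split (.relation [(0x3002001, 0x1111ab1), (0x1000b1a1, 0x333111)])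
       (.relation [(0x10025035, 0x2001), (0x22011, 0x1113665)]))))) (.split (.split
       (.relation [(0x409050901, 0x100010001)]) (.relation [(0x282038201, 0x100010001)])) (.split
       (.relation [(0x29012901, 0x100010001)]) (.relation [(0x10001, 0x100010001)]))))) (.split
       (.split (.split (.split (.split (.split (.relation [(0x10004005, 0x2b), (0x8f7, 0x505111)])
       (.relation [(0x10004005, 0x2b), (0x8f7, 0x505111)])) (.split (.split (.split (.split
       (.relation [(0x1c1, 0x1c1), (0x243, 0xbf)]) (.light 0x80021)) (.split
       (.relation [(0x1003, 0xc101), (0xc101, 0x1003)]) (.light 0x260209))) (.split (.split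
       (.relation [(0x10461, 0x4000031), (0x4000031, 0x10461)]) (.relation [(0xc101, 0x1c1),
       (0x243, 0x40ff)])) (.split (.relation [(0x23011, 0x2209), (0x2209, 0x23011)])
       (.relation [(0x1c1, 0x1c1), (0x243, 0xbf)])))) (.split (.split (.split
       (.relation [(0x19, 0x1002005), (0x1002005, 0x19)]) (.relation [(0x80089, 0x3fe1f),
       (0x40221, 0x7ff87)])) (.split (.relation [(0x20003, 0x40403), (0x40403, 0x20003)])
       (.relation [(0x41003, 0x3fe1f), (0x40221, 0x3f001)]))) (.split (.split
       (.relation [(0x809, 0x41003), (0x41003, 0x809)]) (.relation [(0x40403, 0xfffe007f),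
       (0x100020081, 0x3fc01)])) (.split (.relation [(0x2002001, 0x80089), (0x80089, 0x2002001)])
       (.relation [(0x1002005, 0xfffe007f), (0x100020081, 0xffe003)]))))))
       (.relation [(0x808100313, 0x5c1d), (0x5c411d, 0x8001013)])) (.split (.split (.split (.split
       (.split (.split (.relation [(0x9005, 0x1c1), (0x243, 0x7003)])
       (.relation [(0x84401, 0x1fffc01), (0x2000403, 0x7c3ff)])) (.split
       (.relation [(0x8000801, 0x243), (0x243, 0x8000801)]) (.light 0x80217))) (.split (.split
       (.relation [(0x20069, 0x2000403), (0x2000403, 0x20069)]) (.light 0x24080019)) (.split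
       (.relation [(0x1000021, 0x84401), (0x84401, 0x1000021)]) (.light 0x1000009)))) (.split
       (.split (.split (.relation [(0x2001001, 3), (3, 0x2001001)])
       (.relation [(0x11001403, 0x3831), (0x4853, 0xf000c01)])) (.split
       (.relation [(0x8000801, 0x289), (0x289, 0x8000801)]) (.light 0x1080901))) (.split (.split
       (.relation [(0x801001, 0x521), (0x521, 0x801001)]) (.relation [(0x289, 0x3e0001f),
       (0x4200021, 0x187)])) (.split (.relation [(0x101001, 0x24000401), (0x24000401, 0x101001)])
       (.relation [(3, 0x3e0001f), (0x4200021, 1)]))))) (.split (.split (.split (.split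
       (.relation [(0x820001, 0x521), (0x521, 0x820001)]) (.relation [(0x1000013, 0x3fc03f),
       (0x404041, 0xfffff1)])) (.split (.relation [(0x10401, 0x80d), (0x80d, 0x10401)])
       (.relation [(0x883, 0x3fc03f), (0x404041, 0x781)]))) (.split (.split
       (.relation [(0x802001, 0x883), (0x883, 0x802001)]) (.relation [(0x80d, 0x157ff5),
       (0x408021, 0x2a9)])) (.split (.relation [(0x2001001, 0x1000013), (0x1000013, 0x2001001)])
       (.relation [(0x521, 0x7fb), (0x80d, 0x31f)])))) (.split (.split (.split
       (.relation [(0x10401, 0x1020011), (0x1020011, 0x10401)]) (.relation [(0x1028241, 0x3f0000f),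
       (0x4100011, 0xfe7e3f)])) (.split (.relation [(0x2600001, 0x2a01555), (0x8204001, 0xb55555)])
       (.relation [(0x8200201, 0x3f0000f), (0x4100011, 0x7e001ff)]))) (.split (.split
       (.relation [(0x101001, 0x8200201), (0x8200201, 0x101001)])
       (.relation [(0x2600001, 0x2a01555), (0x8204001, 0xb55555)])) (.split
       (.relation [(0x20069, 0x4100011), (0x4100011, 0x20069)]) (.relation [(0x1020011, 0x1dfffff),
       (0x2600001, 0xfe000f)])))))) (.relation [(0x100140015, 0x100010001)]))) (.split (.split
       (.light 0x20412041) (.light 0x804010409)) (.split (.relation [(0x830093001, 0x100010001)])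
       (.relation [(0x830093001, 0x100010001)])))) (.split (.split (.split
       (.relation [(0x80138013, 0x100010001)]) (.relation [(0x80138013, 0x100010001)])) (.split
       (.relation [(0x40494049, 0x100010001)]) (.relation [(0x950095, 0x100010001)]))) (.split
       (.split (.relation [(0x48214821, 0x100010001)]) (.split (.split (.split (.split (.split
       (.relation [(0x80200041, 0x33332ab), (0x10000809, 0x199ffff3)])
       (.relation [(0xa09, 0x3ff00ff), (0x4010101, 0x607)])) (.split
       (.relation [(0x400d, 0x7fe0003f), (0x80200041, 0x3ffb)]) (.relation [(0x4010101, 0x55557fd),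
       (0x10000809, 0x1550055)]))) (.split (.split (.relation [(0x1000003, 0x4010101),
       (0x4010101, 0x1000003)]) (.relation [(0x400d, 0x7fe0003f), (0x80200041, 0x3ffb)])) (.split
       (.relation [(0x10005, 0xa09), (0xa09, 0x10005)]) (.relation [(0x80200041, 0x33332ab),
       (0x10000809, 0x199ffff3)])))) (.split (.split (.split (.relation [(0x12001, 5),
       (5, 0x12001)]) (.relation [(0x10091, 0x400061), (0xc000a3, 0xff8f)])) (.split
       (.relation [(0x881, 3), (3, 0x881)]) (.relation [(0x20083, 0x400061),
       (0xc000a3, 0x1ff81)]))) (.split (.split (.relation [(0x20401, 0x20083), (0x20083, 0x20401)])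
       (.relation [(3, 3), (5, 1)])) (.split (.relation [(0x10091, 0x400061), (0xc000a3, 0xff8f)])
       (.relation [(0x20881, 3), (5, 0x1f87f)]))))) (.split (.split (.split (.split
       (.relation [(0x20001001, 0x21081), (0x21081, 0x20001001)])
       (.relation [(0x44081, 0x1fe00003), (0x20200005, 0x3c07f)])) (.split
       (.relation [(0x420001, 0x104801), (0x104801, 0x420001)]) (.relation [(0x104003, 0x1fe00003),
       (0x20200005, 0xfc001)]))) (.split (.split (.relation [(0x10005, 0x104003),
       (0x104003, 0x10005)]) (.relation [(0x104801, 0x1f07f), (0x21081, 0xfc7ff)])) (.split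
       (.relation [(0x44081, 0x1fe00003), (0x20200005, 0x3c07f)]) (.light 0x105011)))) (.split
       (.split (.split (.relation [(0x4401, 0x800001), (0x800001, 0x4401)])
       (.relation [(0x20083, 0xf81ff), (0x108201, 0x1ff81)])) (.split
       (.relation [(0x12001, 0x80015), (0x80015, 0x12001)]) (.light 0x200101))) (.split (.split
       (.relation [(0x200081, 0xa09), (0xa09, 0x200081)]) (.relation [(0x80015, 0x1fff7f),
       (0x200181, 0x7fff3)])) (.split (.relation [(0x20083, 0xf81ff), (0x108201, 0x1ff81)])
       (.light 0x200101))))))) (.split (.relation [(0x1070107, 0x100010001)]) (.split (.split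
       (.split (.split (.split (.relation [(0x10005, 0x10013), (0x10013, 0x10005)])
       (.light 0x5004009)) (.split (.relation [(0x20283, 0x200803), (0x200803, 0x20283)])
       (.light 0x4039))) (.split (.split (.relation [(0x50441, 0x303009), (0x303009, 0x50441)])
       (.light 0x80046001)) (.split (.relation [(0x200401, 0x20400041), (0x20400041, 0x200401)])
       (.light 0x108403)))) (.split (.split (.split (.relation [(0x181, 0x240401),
       (0x240401, 0x181)]) (.relation [(0x149, 0xffff3f), (0x1000141, 0xc7)])) (.split
       (.relation [(0x4000021, 0x20221), (0x20221, 0x4000021)]) (.light 0x2200201))) (.split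
       (.split (.light 0x2200201) (.relation [(0x20221, 0x1e201f), (0x226021, 0x1fe1f)])) (.split
       (.relation [(0x149, 0xffff3f), (0x1000141, 0xc7)]) (.relation [(0x3321, 0x1e201f),
       (0x226021, 0x111f)]))))) (.split (.split (.split (.split (.relation [(0x9001, 0x1040021),
       (0x1040021, 0x9001)]) (.relation [(0x409001, 0x3000fff), (0x5001001, 0x3f8fff)])) (.split
       (.relation [(0x10005, 0x1020081), (0x1020081, 0x10005)]) (.light 0x202809))) (.split (.split
       (.relation [(0x4000021, 0x5001001), (0x5001001, 0x4000021)])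
       (.relation [(0x238041, 0xfe007f), (0x1020081, 0x1e803f)])) (.split
       (.relation [(0x409001, 0x3000fff), (0x5001001, 0x3f8fff)])
       (.relation [(0x1040021, 0xfe007f), (0x1020081, 0xfc001f)]))))
       (.relation [(0x41046007, 0x222001), (0x2002011, 0x4551777)])))))))) (.split (.split (.split
       (.split (.split (.light 0xc010c01) (.light 0xc010c01)) (.split
       (.relation [(0x1182108201, 0x100010001)]) (.relation [(0x1182108201, 0x100010001)])))
       (.split (.split (.relation [(0x202100919, 0x1011501), (0x100141401, 0x2001019)]) (.split
       (.split (.split (.split (.split (.relation [(0x1801, 0x210011), (0x210011, 0x1801)])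
       (.relation [(0x14081, 0x1fc01), (0x20403, 0xc07f)])) (.split
       (.relation [(0x200101, 0x2041001), (0x2041001, 0x200101)]) (.relation [(0xc04001, 0x1fc01),
       (0x20403, 0x403fff)]))) (.split (.split (.relation [(0x2003, 0xc04001), (0xc04001, 0x2003)])
       (.relation [(0x2041001, 0x1fc001f), (0x2040021, 0x1fc0fff)])) (.split
       (.relation [(0x2200001, 0x14081), (0x14081, 0x2200001)]) (.relation [(0x210011, 0x1fc001f),
       (0x2040021, 0x1f000f)])))) (.split (.split (.split (.relation [(0x1521, 0x200441),
       (0x200441, 0x1521)]) (.relation [(0x2820001, 0x1f8000ff), (0x20800101, 0x181ffff)])) (.split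
       (.relation [(0xc3001, 0x4400009), (0x4400009, 0xc3001)]) (.relation [(0x149, 0x1f8000ff),
       (0x20800101, 0xc7)]))) (.split (.split (.relation [(0x2001001, 0x149), (0x149, 0x2001001)])
       (.light 0x8400641)) (.split (.relation [(0x2820001, 0x1f8000ff), (0x20800101, 0x181ffff)])
       (.light 0x84001))))) (.split (.relation [(0x10004005, 0x800015), (0x2a800451, 0x505111)])
       (.relation [(0x10004005, 0x800015), (0x2a800451, 0x505111)])))) (.split
       (.relation [(0x100140015, 0x100010001)]) (.split (.split (.split (.split (.split
       (.relation [(0xc10401, 0x1400c03), (0x1400c03, 0xc10401)])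
       (.relation [(0x440081, 0x1fffff7), (0x2000019, 0x3c007f)])) (.split
       (.relation [(0x301, 0x49001), (0x49001, 0x301)]) (.relation [(0x2000019, 0xaabd),
       (0x20049, 0xaaaaad)]))) (.split (.split (.relation [(0x2000019, 0xaabd),
       (0x20049, 0xaaaaad)]) (.relation [(0x49001, 0xc00401), (0x1400c03, 0x38fff)])) (.split
       (.relation [(0x10401, 0x440081), (0x440081, 0x10401)]) (.relation [(0xa14801, 0x3fe10f),
       (0x402311, 0x60c7ff)])))) (.split (.split (.split (.relation [(0x1003, 0x3000011),
       (0x3000011, 0x1003)]) (.relation [(0x20000501, 0x6000ff), (0xa00101, 0x1ffffcff)])) (.split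
       (.relation [(0xc01, 0x25001), (0x25001, 0xc01)]) (.relation [(0xa00101, 0x155ffd5),
       (0x4020081, 0x200055)]))) (.split (.split (.relation [(0x10401, 0xa00101),
       (0xa00101, 0x10401)]) (.relation [(0x25001, 0x3fc03f), (0x404041, 0x1cfff)])) (.split
       (.relation [(0xc1, 0x20000501), (0x20000501, 0xc1)]) (.relation [(0x3000011, 0x3fc03f),
       (0x404041, 0x100000f)]))))) (.split (.split (.split (.split
       (.relation [(0x101001, 0x4000421), (0x4000421, 0x101001)]) (.relation [(0x40241, 0x380007),
       (0x480009, 0x3fe3f)])) (.split (.relation [(0x2003, 0x20000501), (0x20000501, 0x2003)])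
       (.relation [(0x200051, 0x380007), (0x480009, 0x1fffcf)]))) (.split (.split
       (.relation [(0x12001, 0x200051), (0x200051, 0x12001)]) (.light 0x309001)) (.split
       (.relation [(0x1003, 0x800001), (0x800001, 0x1003)]) (.relation [(0x4000421, 0xce77fef),
       (0x15298031, 0x3fffc1f)])))) (.split (.split (.split (.relation [(0x1000021, 0x88021),
       (0x88021, 0x1000021)]) (.light 0x1000009)) (.split (.relation [(0xcb, 0x21081),
       (0x21081, 0xcb)]) (.light 0x192041))) (.split (.split (.relation [(0x12001, 0x20800101),
       (0x20800101, 0x12001)]) (.light 0xa840101)) (.split (.relation [(0x200a01, 0x1f8000ff),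
       (0x20800101, 0x1ff9ff)]) (.relation [(0x88021, 0x1f07f), (0x21081, 0x7801f)])))))))))
       (.split (.split (.split (.split (.split (.split (.split (.split
       (.relation [(0x810041, 0xff81fff), (0x10082001, 0x7f003f)]) (.light 0x809)) (.split
       (.relation [(0x24001, 0x8105), (0x8105, 0x24001)]) (.relation [(0x2a1, 0x1f8f),
       (0x2091, 0x19f)]))) (.split (.split (.relation [(0x8000801, 0x2a1), (0x2a1, 0x8000801)])
       (.light 0x809)) (.split (.relation [(0x4401, 3), (3, 0x4401)])
       (.relation [(0x810041, 0xff81fff), (0x10082001, 0x7f003f)])))) (.split (.split (.split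
       (.relation [(9, 0xe7), (0x129, 7)]) (.light 0x105011)) (.split
       (.relation [(0x10005, 0x2104001), (0x2104001, 0x10005)])
       (.relation [(0x208002001, 0x1ffe03ff), (0x20020401, 0x1f8001fff)]))) (.split (.split
       (.relation [(0x4080001, 0x208002001), (0x208002001, 0x4080001)])
       (.relation [(0x2104001, 0xe7), (0x129, 0x1f03fff)])) (.split
       (.relation [(0x1021, 0x20020401), (0x20020401, 0x1021)]) (.relation [(9, 0xe7),
       (0x129, 7)]))))) (.split (.split (.split (.split (.relation [(0x88411, 0x80010011),
       (0x80010011, 0x88411)]) (.relation [(0x18033, 3), (5, 0x8011)])) (.split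
       (.relation [(0x12001, 0x810041), (0x810041, 0x12001)]) (.relation [(0x800001, 3),
       (5, 0x7fffff)]))) (.split (.split (.relation [(0x8101, 0x800001), (0x800001, 0x8101)])
       (.light 0x22a0001)) (.split (.relation [(0x8000801, 0x18033), (0x18033, 0x8000801)])
       (.light 0x258001)))) (.split (.split (.split (.relation [(0x10005, 0x200141),
       (0x200141, 0x10005)]) (.relation [(0x609, 0x66655), (0x200103, 0xab)])) (.split
       (.relation [(0x1000003, 0x4010101), (0x4010101, 0x1000003)]) (.relation [(3, 0x207),
       (0x609, 1)]))) (.split (.split (.relation [(3, 0x207), (0x609, 1)])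
       (.relation [(0x4010101, 0xaaaff), (0x200103, 0x1550055)])) (.split
       (.relation [(0x609, 0x66655), (0x200103, 0xab)]) (.relation [(0x200141, 0x3ff00ff),
       (0x4010101, 0x1fff3f)])))))) (.relation [(0x700160011, 0x100010001)])) (.split (.split
       (.split (.relation [(0x1202a00803, 0x911), (0x9801, 0x1331bbb33)]) (.split (.split (.split
       (.relation [(0x4010021, 0x3000fff), (0x5001001, 0x3ff001f)])
       (.relation [(0x19001, 0xfe007f), (0x1020081, 0x8fff)])) (.split
       (.relation [(0x400009, 0x5001001), (0x5001001, 0x400009)]) (.relation [(0x188841, 0xfe007f),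
       (0x1020081, 0x8783f)]))) (.split (.split (.relation [(0x10005, 0x1020081),
       (0x1020081, 0x10005)]) (.light 0x240501)) (.split (.relation [(0x200201, 0x19001),
       (0x19001, 0x200201)]) (.relation [(0x4010021, 0x3000fff), (0x5001001, 0x3ff001f)])))))
       (.split (.split (.split (.split (.relation [(0x8000141, 0x19001), (0x2b003, 0x7ffff3f)])
       (.relation [(0x120505, 0x3dfff7), (0x460019, 0xe0303)])) (.split (.light 0x10973)
       (.relation [(0x81011, 0x3dfff7), (0x460019, 0x7f00f)]))) (.split (.split
       (.relation [(0x400009, 0x81011), (0x81011, 0x400009)]) (.light 0x10973)) (.split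
       (.relation [(0x2020001, 0x202009), (0x202009, 0x2020001)]) (.relation [(0x8000141, 0x19001),
       (0x2b003, 0x7ffff3f)])))) (.split (.split (.split (.relation [(0x2009, 0x400061),
       (0x400061, 0x2009)]) (.light 0x420080201)) (.split (.relation [(0x50441, 0x12004001),
       (0x12004001, 0x50441)]) (.light 0x22040801))) (.split (.split
       (.relation [(0x1017, 0x900401), (0x900401, 0x1017)]) (.light 0x28004011)) (.split
       (.relation [(0x10005, 0x3011), (0x3011, 0x10005)]) (.light 0xd004001))))))
       (.relation [(0x182808281, 0x100010001)]))) (.split (.split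
       (.relation [(0x422012205, 0x100010001)]) (.relation [(0x40234023, 0x100010001)])) (.split
       (.relation [(0x1002a002b, 0x100010001)]) (.relation [(0x5080c0809, 0x100010001)])))))
       (.split (.split (.split (.split (.relation [(0x10a100a11, 0x100010001)])
       (.relation [(0x5020412011, 0x100010001)])) (.split (.relation [(0x20912091, 0x100010001)])
       (.relation [(0x850015009, 0x100010001)]))) (.split (.split
       (.relation [(0xc040d0401, 0x100010001)]) (.light 0x6010601)) (.split (.split (.split
       (.relation [(0x10a01a11, 0x23ba0011), (0x2181a0101, 0x11bba01)])
       (.relation [(0x1001, 0x23ba0011), (0x2181a0101, 0x111)])) (.split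
       (.relation [(0x501502003, 0x23ba0011), (0x2181a0101, 0x55411333)])
       (.relation [(0x2300111, 0x23ba0011), (0x2181a0101, 0x211101)])))
       (.relation [(0x8004d0045, 0x100010001)])))) (.split (.split (.split
       (.relation [(0x81418141, 0x100010001)]) (.relation [(0xc01050109, 0x100010001)])) (.split
       (.relation [(0x10001, 0x100010001)]) (.relation [(0x2020252005, 0x100010001)]))) (.split
       (.split (.relation [(0x14c004c01, 0x100010001)]) (.relation [(0xc110c11, 0x100010001)]))
       (.split (.split (.split (.relation [(0x501502003, 0x801), (0x8811, 0x55411333)])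
       (.relation [(0x3021, 0x100111bb), (0x110100a0b, 0x331)])) (.split
       (.relation [(0x10a01a11, 0x100111bb), (0x110100a0b, 0x11bba01)])
       (.relation [(0x1001, 0x100111bb), (0x110100a0b, 0x111)])))
       (.relation [(0x60116011, 0x100010001)]))))))) (.split (.split (.split (.split (.split
       (.split (.relation [(0x4110411, 0x100010001)]) (.split (.split (.split (.split (.split
       (.relation [(0x4000021, 0x210005), (0x210005, 0x4000021)])
       (.relation [(0x9000041, 0x300ffff), (0x5010001, 0x700003f)])) (.split
       (.relation [(0xd41, 0x4080011), (0x4080011, 0xd41)]) (.light 0x4000021))) (.split (.split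
       (.relation [(0x900401, 0x300ffff), (0x5010001, 0x7003ff)]) (.light 0x1020044201)) (.split
       (.relation [(0x25, 0x9000041), (0x9000041, 0x25)]) (.light 0x1020044201)))) (.split (.split
       (.split (.relation [(0x3089, 9), (9, 0x3089)]) (.relation [(0x288001, 0x783f),
       (0x8841, 0x187fff)])) (.split (.relation [(0x200451, 0x2001), (0x2001, 0x200451)])
       (.light 0xa00200801))) (.split (.split (.relation [(0x403, 0x8841), (0x8841, 0x403)])
       (.light 0x80043011)) (.split (.relation [(0x61, 0x288001), (0x288001, 0x61)])
       (.light 0x3800003))))) (.split (.split (.split (.split (.relation [(0x403, 0x60041),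
       (0x60041, 0x403)]) (.relation [(0x8048181, 0x3fe79), (0x4028b, 0x7fc7f7f)])) (.split
       (.relation [(0x8200801, 0x3f80007), (0x4080009, 0x7e007ff)]) (.relation [(0x3005, 0x3e07ff),
       (0x420801, 0x1003)]))) (.split (.split (.relation [(0x3005, 0x3e07ff), (0x420801, 0x1003)])
       (.relation [(0x8200801, 0x3f80007), (0x4080009, 0x7e007ff)])) (.split
       (.relation [(0x20581, 0x420801), (0x420801, 0x20581)]) (.light 0x8001001)))) (.split (.split
       (.split (.relation [(0x25, 0x8a01), (0x8a01, 0x25)]) (.relation [(0x2001, 0x39f),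
       (0x4a1, 0x1fff)])) (.split (.relation [(0x404001, 0x201005), (0x201005, 0x404001)])
       (.relation [(0x80020003, 0x39f), (0x4a1, 0x7ffe0001)]))) (.split (.split
       (.relation [(0x80020003, 0x39f), (0x4a1, 0x7ffe0001)]) (.light 0x4000021)) (.split
       (.relation [(0x4000021, 0x2001), (0x2001, 0x4000021)]) (.relation [(0x8a01, 0x20080003),
       (0x60180005, 0x79ff)]))))))) (.split (.split (.split (.split (.split (.split
       (.relation [(0x80005, 0x20405), (0x20405, 0x80005)]) (.light 0x60801001)) (.split
       (.relation [(0x8c021, 0x8080005), (0x8080005, 0x8c021)]) (.relation [(0x486201, 0xeff07),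
       (0x130109, 0x3821ff)]))) (.split (.split (.relation [(0x10483, 0x14000069),
       (0x14000069, 0x10483)]) (.light 0x882c01)) (.split (.relation [(0x808045, 0x289),
       (0x289, 0x808045)]) (.relation [(0x20405, 0x7f80003), (0x8080005, 0x1fc03)])))) (.split
       (.split (.split (.relation [(0x1004049, 0x200001), (0x200001, 0x1004049)])
       (.light 0x8001241)) (.split (.relation [(0x4125, 0x10453), (0x10453, 0x4125)])
       (.relation [(0xd001, 0x1bffff), (0x2c0001, 0x4fff)]))) (.split (.split
       (.relation [(0x809, 0xd001), (0xd001, 0x809)]) (.relation [(0x10453, 0x80f83f),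
       (0x1810841, 0xfc31)])) (.split (.relation [(0x424003, 0x2c0001), (0x2c0001, 0x424003)])
       (.relation [(0x200001, 0x80f83f), (0x1810841, 0x1fffff)]))))) (.split (.split (.split
       (.split (.relation [(0x300001, 3), (3, 0x300001)]) (.relation [(0x80089, 0x7c07),
       (0x8409, 0x7ff87)])) (.split (.relation [(0x100205, 0x1fc0007f), (0x20400081, 0xffe03)])
       (.relation [(0x184001, 0x7c07), (0x8409, 0x83fff)]))) (.split (.split
       (.relation [(0xd, 0x184001), (0x184001, 0xd)]) (.relation [(0x100205, 0x1fc0007f),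
       (0x20400081, 0xffe03)])) (.split (.relation [(0x20003, 0x3000005), (0x3000005, 0x20003)])
       (.relation [(3, 0x1fc0007f), (0x20400081, 1)])))) (.split (.split (.split
       (.relation [(0x850001, 0xffe1fff), (0x10022001, 0x7cffff)])
       (.relation [(0xc00a3, 0x555f555), (0x10022001, 0x3ffdf)])) (.split
       (.relation [(0x880001, 0x10031), (0x10031, 0x880001)]) (.relation [(0x200001, 0x40061),
       (0xc00a3, 0x1fffff)]))) (.split (.split (.relation [(0x20003, 0x200001),
       (0x200001, 0x20003)]) (.relation [(0x10031, 0xffe1fff), (0x10022001, 0xffef)])) (.split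
       (.relation [(0xc00a3, 0x555f555), (0x10022001, 0x3ffdf)]) (.relation [(0x850001, 0xffe1fff),
       (0x10022001, 0x7cffff)])))))) (.split (.split (.split (.split (.split
       (.relation [(0x6501, 0x28000c5), (0x28000c5, 0x6501)]) (.relation [(0x618021, 0x3ffc71f),
       (0x4004921, 0x20801f)])) (.split (.relation [(0xa01, 0x200001), (0x200001, 0xa01)])
       (.light 0x40184001))) (.split (.split (.relation [(0xa01, 0x104801), (0x104801, 0xa01)])
       (.light 0x1491f)) (.split (.relation [(0x1010a1, 0x240000f), (0x240000f, 0x1010a1)])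
       (.light 0x320011)))) (.relation [(0x9008001, 0x28a891), (0x2a22181, 0x999111)])) (.split
       (.relation [(0x28a891, 0x28a891), (0x2a22181, 0x2a081)])
       (.relation [(0x2602401201, 0x28a891), (0x2a22181, 0x244622311)]))))) (.split (.split
       (.light 0x80038003) (.light 0x1a000a001)) (.split (.relation [(0x600270021, 0x100010001)])
       (.relation [(0x600270021, 0x100010001)])))) (.split (.split (.split
       (.relation [(0x302420241, 0x100010001)]) (.relation [(0x302420241, 0x100010001)])) (.split
       (.relation [(0x2304020421, 0x100010001)]) (.relation [(0x308100813, 0x100010001)]))) (.split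
       (.split (.relation [(0x124402441, 0x100010001)]) (.split (.split
       (.relation [(0x2602401201, 0xc8444011), (0xc4c004101, 0x244622311)])
       (.relation [(0x7046041, 0xc8444011), (0xc4c004101, 0x773551)])) (.split
       (.relation [(0x9008001, 0xc8444011), (0xc4c004101, 0x999111)]) (.split (.split (.split
       (.relation [(0x2005, 0x8001), (0x8001, 0x2005)]) (.relation [(0x1080201, 0x557d5),
       (0x100881, 0x57ff55)])) (.split (.relation [(0x1000005, 0x80020201),
       (0x80020201, 0x1000005)]) (.relation [(0x408005, 0xf801ff), (0x1080201, 0x3f8003)])))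
       (.split (.split (.relation [(0x9001, 0x408005), (0x408005, 0x9001)])
       (.relation [(0x80020201, 0x130001), (0x350003, 0x7ffe01ff)])) (.split
       (.relation [(0x1080201, 0x557d5), (0x100881, 0x57ff55)]) (.relation [(0x8001, 0x130001),
       (0x350003, 0x7fff)]))))))) (.split (.relation [(0x20109010b, 0x100010001)]) (.split (.split
       (.relation [(0x2200101, 0x8899911), (0x80100801, 0x200011)]) (.split (.split (.split
       (.relation [(0x22051, 0xa0603), (0xa0603, 0x22051)]) (.relation [(0x1040081, 0x3fff87ff),
       (0x40008801, 0xfc007f)])) (.split (.relation [(0x9001, 0xa0603), (0xa0603, 0x9001)])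
       (.relation [(0xc101, 0x3fff87ff), (0x40008801, 0x40ff)]))) (.split (.split
       (.relation [(0x4003, 0xc101), (0xc101, 0x4003)]) (.light 0x10800811)) (.split
       (.relation [(0x8001001, 0x1040081), (0x1040081, 0x8001001)])
       (.relation [(0x330021, 0x7ffa1f), (0x800e21, 0x11001f)]))))) (.split
       (.relation [(0x2602401201, 0x440441991), (0x4044058081, 0x244622311)])
       (.relation [(0x7046041, 0x440441991), (0x4044058081, 0x773551)]))))))) (.split (.split
       (.split (.split (.relation [(0x520402045, 0x100010001)]) (.split (.split (.split (.split
       (.split (.relation [(0x803, 0x2000821), (0x2000821, 0x803)]) (.light 0x1004200201)) (.split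
       (.relation [(0xb001, 0xaabd), (0x20049, 0x2555)]) (.relation [(0x2400041, 0x1007),
       (0x3009, 0x1c0003f)]))) (.split (.split (.relation [(0x400009, 0x600003),
       (0x600003, 0x400009)]) (.relation [(0xb001, 0xaabd), (0x20049, 0x2555)])) (.split
       (.relation [(0x1000101, 0x600003), (0x600003, 0x1000101)]) (.relation [(0x2000821, 0x6fff),
       (0xb001, 0x1fff81f)])))) (.split (.split (.split (.relation [(0x3101, 0x7ff001f),
       (0x8010021, 0x10ff)]) (.relation [(0xa80001, 0x7ff8003), (0x8008005, 0x67ffff)])) (.split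
       (.relation [(0x181, 0x400c01), (0x400c01, 0x181)]) (.light 0x181))) (.split (.split
       (.relation [(0x800809, 0x7ff8003), (0x8008005, 0x7ff807)])
       (.relation [(0x400c01, 0x7ff001f), (0x8010021, 0x3ffbff)])) (.split
       (.relation [(0x24001, 0xa80001), (0xa80001, 0x24001)]) (.relation [(0x3101, 0x7ff001f),
       (0x8010021, 0x10ff)]))))) (.split (.split (.split (.split (.relation [(0x851, 0x36003),
       (0x5a005, 0x7cf)]) (.light 0x2091001)) (.split (.relation [(0x90005, 0x36003),
       (0x5a005, 0x70003)]) (.light 0x20140041))) (.split (.split (.relation [(0x1009, 0x484001),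
       (0x484001, 0x1009)]) (.relation [(0x90005, 0x36003), (0x5a005, 0x70003)])) (.split
       (.relation [(0x501, 0x14003), (0x14003, 0x501)]) (.relation [(0x851, 0x36003),
       (0x5a005, 0x7cf)])))) (.split (.split (.split (.relation [(0x181, 0x20004401),
       (0x20004401, 0x181)]) (.light 0x181)) (.split (.relation [(0x400009, 0x2400041),
       (0x2400041, 0x400009)]) (.relation [(0x101081, 0x7fffbff), (0x8000c01, 0xff07f)]))) (.split
       (.split (.relation [(0x1004001, 0x101081), (0x101081, 0x1004001)])
       (.relation [(0x2400041, 0x107fff), (0x308001, 0x1c0003f)])) (.split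
       (.relation [(0x283, 0x7fffbff), (0x8000c01, 0x181)]) (.relation [(0x20004401, 0x107fff),
       (0x308001, 0x1fffc3ff)]))))))) (.split (.relation [(0x54008400d, 0x100010001)])
       (.relation [(0x5100c1009, 0x100010001)]))) (.split (.split
       (.relation [(0xa081a081, 0x100010001)]) (.relation [(0xa081a081, 0x100010001)])) (.split
       (.relation [(0x10001, 0x100010001)]) (.relation [(0x40808180c1, 0x100010001)])))) (.split
       (.split (.split (.relation [(0x4102440205, 0x100010001)]) (.split (.split
       (.relation [(0x1406402005, 0x8001), (0x88011, 0x155377555)]) (.split (.split (.split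
       (.relation [(0x800005, 0x8800801), (0x8800801, 0x800005)]) (.light 0x1c6001)) (.split
       (.relation [(0x402041, 0xf8001ff), (0x10800201, 0x3fe03f)]) (.light 0xe421))) (.split
       (.split (.relation [(0x420001, 0xc5), (0xc5, 0x420001)]) (.relation [(0x402041, 0xf8001ff),
       (0x10800201, 0x3fe03f)])) (.split (.relation [(0x80e01, 0x301001), (0x301001, 0x80e01)])
       (.relation [(0x8800801, 0xf8001ff), (0x10800201, 0x78007ff)]))))) (.split
       (.relation [(0x25b001d, 0x800111), (0x8801001, 0x27cccd)]) (.split (.split (.split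
       (.relation [(0x141, 0x6401), (0x6401, 0x141)]) (.relation [(0xc41, 0x7e03ff),
       (0x820401, 0x43f)])) (.split (.relation [(0x181, 0xc011), (0xc011, 0x181)])
       (.light 0x4806101))) (.split (.split (.relation [(0x141, 0x820401), (0x820401, 0x141)])
       (.relation [(0xc011, 0x3e001ff), (0x4200201, 0x400f)])) (.split
       (.relation [(0xc41, 0x7e03ff), (0x820401, 0x43f)]) (.relation [(0x6401, 0x3e001ff),
       (0x4200201, 0x23ff)]))))))) (.split (.light 0x100280029)
       (.relation [(0x120a020a1, 0x100010001)]))) (.split (.split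
       (.relation [(0x8c018c01, 0x100010001)]) (.relation [(0x410811085, 0x100010001)])) (.split
       (.relation [(0x82218221, 0x100010001)]) (.relation [(0x4010211061, 0x100010001)]))))))
       (.split (.split (.split (.split (.split (.relation [(0x201430141, 0x100010001)])
       (.relation [(0x201430141, 0x100010001)])) (.split (.relation [(0x201830181, 0x100010001)])
       (.relation [(0x10001, 0x100010001)]))) (.split (.split (.split (.split (.split (.split
       (.split (.relation [(0x100841, 0x7f1fff), (0x812001, 0xff83f)])
       (.relation [(0x4421, 0x7bfff), (0x8c001, 0x3c1f)])) (.split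
       (.relation [(0x1004001, 0x80101001), (0x80101001, 0x1004001)])
       (.relation [(0x400043, 0x7bfff), (0x8c001, 0x3fffc1)]))) (.split (.split
       (.relation [(0x4000021, 0x400043), (0x400043, 0x4000021)])
       (.relation [(0x80101001, 0x7f1fff), (0x812001, 0x7ff00fff)])) (.split
       (.relation [(0x2020001, 0x4421), (0x4421, 0x2020001)]) (.light 0x2020001)))) (.split (.split
       (.split (.relation [(0x501, 0x2014001), (0x2014001, 0x501)])
       (.relation [(0xa2001, 0x18001803), (0x28002805, 0x61fff)])) (.split
       (.relation [(0x8001001, 0x8080021), (0x8080021, 0x8001001)])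
       (.relation [(0x280003, 0x18001803), (0x28002805, 0x180001)]))) (.split (.split
       (.relation [(0x280003, 0x18001803), (0x28002805, 0x180001)])
       (.relation [(0x8080021, 0x10010003), (0x30030005, 0x7f8001f)])) (.split
       (.relation [(0xa2001, 0x18001803), (0x28002805, 0x61fff)])
       (.relation [(0x2014001, 0x10010003), (0x30030005, 0x1ff3fff)]))))) (.split (.split (.split
       (.split (.relation [(0x200081, 0x35), (0x35, 0x200081)]) (.relation [(0x2000a1, 0x3ffe1),
       (0x40023, 0x1fff9f)])) (.split (.relation [(0x300101, 0x9ff), (0x1a01, 0x1000ff)])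
       (.relation [(0x100102001, 0x3ffe1), (0x40023, 0xfff01fff)]))) (.split (.split
       (.relation [(0x2020001, 0x100102001), (0x100102001, 0x2020001)]) (.light 0x2020001)) (.split
       (.relation [(0x2000a1, 0x3ffe1), (0x40023, 0x1fff9f)]) (.relation [(0x35, 0x9ff),
       (0x1a01, 0x13)])))) (.split (.split (.split (.relation [(0x1000101, 0x4800009),
       (0x4800009, 0x1000101)]) (.relation [(0x180041, 0x7ff803), (0x800805, 0x8003f)])) (.split
       (.relation [(0x600001, 0x400043), (0x400043, 0x600001)]) (.relation [(0x800805, 0x2a01555),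
       (0x8204001, 0x2aa801)]))) (.split (.split (.relation [(0x800805, 0x2a01555),
       (0x8204001, 0x2aa801)]) (.relation [(0x400043, 0x3800007), (0x4800009, 0x3fffc1)])) (.split
       (.relation [(0x800401, 0x180041), (0x180041, 0x800401)]) (.light 0x480481))))))
       (.relation [(0x194009401, 0x100010001)])) (.split (.relation [(0x1080518041, 0x100010001)])
       (.relation [(0x800a100a9, 0x100010001)])))) (.split (.split (.split
       (.relation [(0x92002200b, 0x100010001)]) (.relation [(0x92002200b, 0x100010001)])) (.split
       (.relation [(0x1104120403, 0x100010001)]) (.relation [(0x88038803, 0x100010001)]))) (.split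
       (.split (.split (.split (.split (.split (.split (.relation [(0x882001, 0x1ffbf),
       (0x200c1, 0x781fff)]) (.relation [(0x2010401, 0x38007f), (0x480081, 0x1ff03ff)])) (.split
       (.relation [(0x141, 0x200c1), (0x200c1, 0x141)]) (.relation [(0x251, 0x38007f),
       (0x480081, 0x1cf)]))) (.split (.split (.relation [(0x2020001, 0x251), (0x251, 0x2020001)])
       (.light 0x1040600801)) (.split (.relation [(0x141, 0x2010401), (0x2010401, 0x141)])
       (.relation [(0x882001, 0x1ffbf), (0x200c1, 0x781fff)])))) (.relation [(0x10109081, 0x223),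
       (0x2013, 0x1100991)])) (.split (.split (.split (.split (.relation [(0x218011, 0x808009),
       (0x808009, 0x218011)]) (.relation [(0x13001, 0x8001f), (0x180021, 0xefff)])) (.split
       (.relation [(0x4080001, 0x8a0001), (0x8a0001, 0x4080001)]) (.relation [(0x440003, 0x8001f),
       (0x180021, 0x3c0001)]))) (.split (.split (.relation [(0x440003, 0x8001f),
       (0x180021, 0x3c0001)]) (.light 0x48280081)) (.split (.relation [(0xb, 0x13001),
       (0x13001, 0xb)]) (.light 0x48280081)))) (.relation [(0x1c00d011, 0x201),
       (0x2211, 0x1ddd001)]))) (.relation [(0x1c010c011, 0x100010001)])) (.split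
       (.relation [(0x10d010d, 0x100010001)]) (.light 0x250025))))) (.split (.split (.split (.split
       (.light 0xa100a1) (.light 0xa100a1)) (.split (.relation [(0x2810091021, 0x100010001)])
       (.relation [(0x2810091021, 0x100010001)]))) (.split (.split (.split (.split (.split (.split
       (.split (.relation [(0x400009, 0x801), (0x801, 0x400009)]) (.relation [(0x8045, 0x7007fff),
       (0x9008001, 0x7fc3)])) (.split (.relation [(0x40810001, 0x381ff), (0x48201, 0x3f80ffff)])
       (.light 0x400009))) (.split (.split (.relation [(0x404001, 0x8029), (0x8029, 0x404001)])
       (.relation [(0x40810001, 0x381ff), (0x48201, 0x3f80ffff)])) (.split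
       (.relation [(0x280001, 0x8045), (0x8045, 0x280001)]) (.relation [(0x801, 0x381ff),
       (0x48201, 0x7ff)])))) (.split (.split (.split (.relation [(0x520005, 0x30a005),
       (0x30a005, 0x520005)]) (.light 0x1009)) (.split (.relation [(0x802801, 0x3f81fff),
       (0x4082001, 0x7fe7ff)]) (.relation [(0x12401, 0x3e0001), (0x420003, 0xe3ff)]))) (.split
       (.split (.relation [(0x12401, 0x3e0001), (0x420003, 0xe3ff)])
       (.relation [(0x802801, 0x3f81fff), (0x4082001, 0x7fe7ff)])) (.split
       (.relation [(0x2000401, 0x2002081), (0x2002081, 0x2000401)])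
       (.relation [(0x30a005, 0x3f81fff), (0x4082001, 0x106003)]))))) (.split (.split (.split
       (.split (.relation [(0x2080001, 0x251), (0x251, 0x2080001)]) (.light 0x508003)) (.split
       (.relation [(0x80009, 0x82011), (0x82011, 0x80009)]) (.light 0x20848801))) (.split (.split
       (.relation [(0x2289, 0x801), (0x801, 0x2289)]) (.light 0x1402401)) (.split
       (.relation [(0x201411, 0x4811), (0x4811, 0x201411)]) (.relation [(0x251, 0x7e00f),
       (0x82011, 0x1cf)])))) (.split (.split (.split (.relation [(0x80081, 0x1000049),
       (0x1000049, 0x80081)]) (.light 0x220108009)) (.split (.relation [(0x10013, 0x300ffff),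
       (0x5010001, 0xfff1)]) (.light 0x220108009))) (.split (.split (.relation [(0x4845, 0x140065),
       (0x140065, 0x4845)]) (.light 0x400009)) (.split (.relation [(0x400009, 0x6041),
       (0x6041, 0x400009)]) (.relation [(0x1000049, 0x300ffff), (0x5010001, 0xffffc7)]))))))
       (.relation [(0x4110411, 0x100010001)])) (.split (.split (.split
       (.relation [(0x600403203, 0x225151), (0x2074441, 0x66622133)])
       (.relation [(0x225151, 0x225151), (0x2074441, 0x20541)])) (.split
       (.relation [(0x9008001, 0x225151), (0x2074441, 0x999111)]) (.split (.split (.split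
       (.relation [(0x12001, 0x9040b), (0x9040b, 0x12001)]) (.light 0x8000891)) (.split
       (.relation [(0x31, 0x208002001), (0x208002001, 0x31)]) (.light 0x3000203))) (.split (.split
       (.relation [(0xc1, 9), (9, 0xc1)]) (.light 0x420010041)) (.split
       (.relation [(0x1303, 0x1400541), (0x1400541, 0x1303)]) (.relation [(0x9040b, 0x3fff3003),
       (0x40015005, 0x703f9)])))))) (.split (.split (.split (.split (.split
       (.relation [(0x1303, 0x102201), (0x102201, 0x1303)]) (.relation [(0xa0003, 0xfe1ff),
       (0x102201, 0x60001)])) (.split (.relation [(0x1009, 9), (9, 0x1009)])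
       (.relation [(0x20281, 0xfe1ff), (0x102201, 0x1fe7f)]))) (.split (.split
       (.relation [(0x31, 0x20281), (0x20281, 0x31)]) (.relation [(9, 0xfe1ff), (0x102201, 7)]))
       (.split (.relation [(0xa0003, 0xfe1ff), (0x102201, 0x60001)]) (.light 0x10024023)))) (.split
       (.split (.split (.relation [(0x1021, 0x10025), (0x10025, 0x1021)])
       (.relation [(0x800001, 0x7c01), (0x8403, 0x7fffff)])) (.split
       (.relation [(0xa00001, 0x402101), (0x402101, 0xa00001)]) (.relation [(0x50002001, 0x7c01),
       (0x8403, 0x30001fff)]))) (.split (.split (.relation [(0x50002001, 0x7c01),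
       (0x8403, 0x30001fff)]) (.relation [(0x402101, 0x7fffb), (0x8000d, 0x3fe0ff)])) (.split
       (.relation [(0x8003, 0x800001), (0x800001, 0x8003)]) (.relation [(0x10025, 0x7fffb),
       (0x8000d, 0xffe3)]))))) (.split (.split (.split (.split (.relation [(0x29009, 0x800025),
       (0x800025, 0x29009)]) (.relation [(9, 0x1c03ffd), (0x2404007, 7)])) (.split
       (.relation [(0x8003, 0x9101), (0x9101, 0x8003)]) (.relation [(0xf081, 0x1c03ffd),
       (0x2404007, 0x507f)]))) (.split (.split (.relation [(0x200161, 0xf081), (0xf081, 0x200161)])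
       (.relation [(0x9101, 0x7fffe3), (0x800025, 0x70ff)])) (.split (.relation [(0x84029, 9),
       (9, 0x84029)]) (.light 0x8248001)))) (.split (.split (.split (.relation [(0x3601, 0x200051),
       (0x200051, 0x3601)]) (.relation [(0x1019, 0x9f), (0x1a1, 0xff7)])) (.split
       (.relation [(0x40149, 0x1040000f), (0x1040000f, 0x40149)]) (.light 0x803105))) (.split
       (.split (.relation [(0x1309, 0x1a1), (0x1a1, 0x1309)]) (.relation [(0x4c0209, 0x1cefff),
       (0x253001, 0x3bfe07)])) (.split (.relation [(0xa1, 0x1800005), (0x1800005, 0xa1)])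
       (.light 0x40860001))))))))) (.split (.split (.split (.split (.split (.split (.split (.split
       (.relation [(0x1080201, 0x5557d55), (0x10008801, 0x57ff55)]) (.relation [(0x201, 0x7fc1ff),
       (0x804201, 0x1ff)])) (.split (.relation [(0x200201, 0x14020001), (0x14020001, 0x200201)])
       (.relation [(0x408101, 0x7fc1ff), (0x804201, 0x3f80ff)]))) (.split (.split
       (.relation [(0x1000005, 0x408101), (0x408101, 0x1000005)])
       (.relation [(0x14020001, 0xf801ff), (0x1080201, 0xc01ffff)])) (.split
       (.relation [(0x2801, 0x201), (0x201, 0x2801)]) (.relation [(0x1080201, 0x5557d55),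
       (0x10008801, 0x57ff55)])))) (.relation [(0x9008001, 0x2ab), (0x281b, 0x999111)])) (.split
       (.relation [(0x40444099, 0x40444099), (0x444004909, 0x4404009)])
       (.relation [(0x600403203, 0x40444099), (0x444004909, 0x66622133)])))
       (.relation [(0x308040807, 0x100010001)])) (.split (.split (.split
       (.relation [(0x802a01203, 0x111dd155), (0x100c0c405, 0x88a00133)])
       (.relation [(0x600403203, 0x111dd155), (0x100c0c405, 0x66622133)])) (.split (.split (.split
       (.split (.relation [(0x1009, 0x4080011), (0x4080011, 0x1009)])
       (.relation [(0xa663, 0x6000401), (0xa000c03, 0x6221)])) (.split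
       (.relation [(0x601, 0x100301), (0x100301, 0x601)]) (.light 0x1180081))) (.split (.split
       (.relation [(0x200201, 0xa000c03), (0xa000c03, 0x200201)]) (.relation [(0x100301, 0x3fe1f),
       (0x40221, 0xffeff)])) (.split (.relation [(0x28811, 0xa663), (0xa663, 0x28811)])
       (.relation [(0x4080011, 0x3fe1f), (0x40221, 0x3f8000f)])))) (.relation [(0x819, 0x22233111),
       (0x200102001, 0x89)]))) (.relation [(0x160206021, 0x100010001)]))) (.split (.split
       (.relation [(0x90c080c01, 0x100010001)]) (.relation [(0x90c080c01, 0x100010001)])) (.split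
       (.relation [(0x112401241, 0x100010001)]) (.relation [(0x980408049, 0x100010001)]))))))) }]

theorem covers_six : Covers 6 8 16 (· % 4 == 1) [1, 0x37] := by
  refine covers_three.lift (c := 8) (branches := branchesSix) ?_
  decide +kernel

theorem covers_twelve : Covers 12 4 16 (· % 4 == 1) [0x8a3, 0x427] := by
  refine covers_six.lift (c := 4) (branches := branchesTwelve) ?_
  decide +kernel

theorem covers_twentyFour : Covers 24 2 16 (· % 4 == 1) [0xa03e24] := by
  refine covers_twelve.lift (c := 2) (branches := branchesTwentyFour) ?_
  decide +kernel

theorem covers_fortyEight : Covers 48 1 16 (fun _ => true) [] := by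
  refine covers_twentyFour.lift (c := 1) (branches := branchesFortyEight) ?_
  decide +kernel

end Search

end DoubleCirculant

namespace DoubleCirculant

open Finset Polynomial
open scoped Matrix

section BinaryVector

variable {ι κ : Type*} [Fintype ι] [Fintype κ]

theorem hammingNorm_eq_sum_val (x : ι → ZMod 2) : hammingNorm x = ∑ i, (x i).val := by
  have (a : ZMod 2) : (if a ≠ 0 then 1 else 0) = a.val := by revert a; decide
  simp only [hammingNorm, card_filter, this]

theorem natCast_hammingNorm (x : ι → ZMod 2) : (hammingNorm x : ZMod 2) = 1 ⬝ᵥ x := by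
  simp only [hammingNorm_eq_sum_val, Nat.cast_sum, ZMod.natCast_zmod_val, one_dotProduct]

theorem hammingNorm_sumElim (x : ι → ZMod 2) (y : κ → ZMod 2) :
    hammingNorm (Sum.elim x y) = hammingNorm x + hammingNorm y := by
  simp only [hammingNorm_eq_sum_val, Fintype.sum_sum_type, Sum.elim_inl, Sum.elim_inr]

theorem hammingNorm_comp_equiv (x : ι → ZMod 2) (e : κ ≃ ι) :
    hammingNorm (x ∘ e) = hammingNorm x := by
  simp only [hammingNorm_eq_sum_val]
  exact Equiv.sum_comp e fun i => (x i).val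

theorem hammingNorm_add_one (x : ι → ZMod 2) :
    hammingNorm (x + 1) + hammingNorm x = Fintype.card ι := by
  have (a : ZMod 2) : (a + 1).val + a.val = 1 := by revert a; decide
  simp [hammingNorm_eq_sum_val, ← sum_add_distrib, this]

theorem hammingNorm_one : hammingNorm (1 : ι → ZMod 2) = Fintype.card ι := by
  rw [← hammingNorm_add_one 0, zero_add, hammingNorm_zero, add_zero]

theorem four_dvd_hammingNorm_add {x y : ι → ZMod 2} (hxy : x ⬝ᵥ y = 0) (hx : 4 ∣ hammingNorm x)
    (hy : 4 ∣ hammingNorm y) : 4 ∣ hammingNorm (x + y) := by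
  have hadd : hammingNorm (x + y) + 2 * ∑ i, (x i).val * (y i).val =
      hammingNorm x + hammingNorm y := by
    have (a b : ZMod 2) : (a + b).val + 2 * (a.val * b.val) = a.val + b.val := by
      revert a b; decide
    simp only [hammingNorm_eq_sum_val, mul_sum, ← sum_add_distrib, Pi.add_apply, this]
  have heven : 2 ∣ ∑ i, (x i).val * (y i).val := by
    rw [← ZMod.natCast_eq_zero_iff, ← hxy, dotProduct]
    simp only [Nat.cast_sum, Nat.cast_mul, ZMod.natCast_zmod_val]
  lia

end BinaryVector

section Krawtchouk

variable {ι : Type*} [Fintype ι]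

/-- The nontrivial additive character of the binary field. -/
def sign : AddChar (ZMod 2) ℤ := AddChar.zmodChar 2 (ζ := -1) (by norm_num)

theorem sign_one : sign 1 = -1 := rfl

/-- The value at `w` of the Krawtchouk polynomial of degree `k` for words of length `n`: the sum
of `(-1) ^ (c ⬝ᵥ u)` over the words `u` of weight `k`, for any word `c` of weight `w`. -/
noncomputable def krawtchouk (n k w : ℕ) : ℤ :=
  ((1 - X) ^ w * (1 + X) ^ (n - w) : ℤ[X]).coeff k

theorem krawtchouk_eq_sum (n k w : ℕ) :
    krawtchouk n k w =
      ∑ i ∈ range (k + 1), (-1) ^ i * (w.choose i * (n - w).choose (k - i) : ℤ) := by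
  have hcomp : (1 - X : ℤ[X]) ^ w = ((1 + X) ^ w : ℤ[X]).comp (C (-1) * X) := by
    simp [sub_eq_add_neg]
  rw [krawtchouk, coeff_mul, Nat.sum_antidiagonal_eq_sum_range_succ_mk]
  refine sum_congr rfl fun i _ => ?_
  rw [hcomp, comp_C_mul_X_coeff, coeff_one_add_X_pow, coeff_one_add_X_pow]
  ring

theorem sum_sign_mul_X_pow [DecidableEq ι] (c : ι → ZMod 2) :
    ∑ u : ι → ZMod 2, C (sign (c ⬝ᵥ u)) * X ^ hammingNorm u =
      (1 - X) ^ hammingNorm c * (1 + X) ^ (Fintype.card ι - hammingNorm c) := by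
  have hfactor (i : ι) : ∑ b : ZMod 2, (C (sign (c i * b)) * X ^ b.val : ℤ[X]) =
      if c i ≠ 0 then 1 - X else 1 + X := by
    rw [show (univ : Finset (ZMod 2)) = {0, 1} from rfl, sum_pair zero_ne_one]
    obtain h | h := eq_zero_or_one (c i) <;>
      simp [h, sign_one, ZMod.val_one, sub_eq_add_neg]
  have hcard : #{i | ¬c i ≠ 0} = Fintype.card ι - hammingNorm c :=
    Nat.eq_sub_of_add_eq' (card_filter_add_card_filter_not _)
  calc _ = ∏ i, ∑ b : ZMod 2, (C (sign (c i * b)) * X ^ b.val : ℤ[X]) := by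
        rw [prod_univ_sum, Fintype.piFinset_univ]
        refine sum_congr rfl fun u _ => ?_
        have hsign : sign (c ⬝ᵥ u) = ∏ i, sign (c i * u i) :=
          map_prod sign.toMonoidHom (fun i => Multiplicative.ofAdd (c i * u i)) univ
        rw [prod_mul_distrib, prod_pow_eq_pow_sum, ← hammingNorm_eq_sum_val, ← map_prod, hsign]
    _ = _ := by
        rw [prod_congr rfl fun i _ => hfactor i, prod_ite, prod_const, prod_const, hcard]
        rfl

theorem sum_sign_eq_krawtchouk [DecidableEq ι] (c : ι → ZMod 2) (k : ℕ) :
    ∑ u : ι → ZMod 2 with hammingNorm u = k, sign (c ⬝ᵥ u) =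
      krawtchouk (Fintype.card ι) k (hammingNorm c) := by
  rw [krawtchouk, ← sum_sign_mul_X_pow, finsetSum_coeff, sum_filter]
  refine sum_congr rfl fun u _ => ?_
  rw [coeff_C_mul_X_pow]
  simp only [eq_comm]

end Krawtchouk

end DoubleCirculant

namespace IsSelfDual

open DoubleCirculant Finset
open scoped Matrix

variable {ι : Type*} [Fintype ι] {C C' : Submodule (ZMod 2) (ι → ZMod 2)}

theorem mem_iff (hC : IsSelfDual C) {x : ι → ZMod 2} : x ∈ C ↔ ∀ y ∈ C, y ⬝ᵥ x = 0 := by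
  simp only [dotProduct_comm _ x]
  exact hC x

theorem dotProduct_eq_zero (hC : IsSelfDual C) {x y : ι → ZMod 2} (hx : x ∈ C) (hy : y ∈ C) :
    x ⬝ᵥ y = 0 :=
  hC.mem_iff.mp hy x hx

theorem one_mem (hC : IsSelfDual C) : 1 ∈ C := by
  refine hC.mem_iff.mpr fun y hy => ?_
  have (a : ZMod 2) : a * 1 = a * a := by revert a; decide
  rw [← hC.dotProduct_eq_zero hy hy]
  exact sum_congr rfl fun i _ => this (y i)

theorem two_mul_finrank (hC : IsSelfDual C) :
    2 * Module.finrank (ZMod 2) C = Fintype.card ι := by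
  classical
  set B : LinearMap.BilinForm (ZMod 2) (ι → ZMod 2) := Matrix.toBilin' 1
  have horthogonal : B.orthogonal C = C := by
    ext x
    simp only [LinearMap.BilinForm.mem_orthogonal_iff, B, Matrix.toBilin'_apply',
      Matrix.one_mulVec, hC.mem_iff (x := x)]
  have hB : B.Nondegenerate :=
    LinearMap.BilinForm.nondegenerate_toBilin'_iff_det_ne_zero.mpr (by simp)
  have hfinrank := LinearMap.BilinForm.finrank_orthogonal hB C
  have hle := Submodule.finrank_le C
  rw [horthogonal, Module.finrank_pi] at hfinrank
  rw [Module.finrank_pi] at hle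
  lia

theorem four_dvd_hammingNorm {S : Set (ι → ZMod 2)}
    (hC : IsSelfDual (Submodule.span (ZMod 2) S)) (hS : ∀ x ∈ S, 4 ∣ hammingNorm x)
    {x : ι → ZMod 2} (hx : x ∈ Submodule.span (ZMod 2) S) : 4 ∣ hammingNorm x := by
  induction hx using Submodule.span_induction with
  | mem x hx => exact hS x hx
  | zero => simp
  | add x y hx hy ihx ihy => exact four_dvd_hammingNorm_add (hC.dotProduct_eq_zero hx hy) ihx ihy
  | smul a x _ ih => obtain rfl | rfl := eq_zero_or_one a <;> simp [ih]

theorem exists_mem_of_neighbor (hC : IsSelfDual C) (hC' : IsSelfDual C')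
    (hneighbor : Module.finrank (ZMod 2) ↥(C ⊓ C') + 1 = Module.finrank (ZMod 2) C') :
    ∃ y ∈ C', ∀ c ∈ C, c ⬝ᵥ y = 0 → c ∈ C' := by
  have hlt : C ⊓ C' < C' := inf_le_right.lt_of_ne fun h => by rw [h] at hneighbor; lia
  obtain ⟨y, hy, hyC⟩ := SetLike.exists_of_lt hlt
  have hspan : (C ⊓ C') ⊔ Submodule.span (ZMod 2) {y} = C' := by
    refine Submodule.eq_of_le_of_finrank_le
      (sup_le inf_le_right ((Submodule.span_singleton_le_iff_mem y C').mpr hy)) ?_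
    rw [← hneighbor]
    exact Submodule.finrank_lt_finrank_of_lt (Submodule.lt_sup_iff_notMem.mpr hyC)
  refine ⟨y, hy, fun c hc hcy => hC'.mem_iff.mpr fun z hz => ?_⟩
  obtain ⟨u, hu, v, hv, rfl⟩ := Submodule.mem_sup.mp (hspan ▸ hz)
  obtain ⟨t, rfl⟩ := Submodule.mem_span_singleton.mp hv
  rw [dotProduct_comm, dotProduct_add, dotProduct_smul, hcy, smul_zero, add_zero,
    hC.dotProduct_eq_zero hc hu.1]

theorem exists_dotProduct_eq_one_of_neighbor (hC : IsSelfDual C) (hC' : IsSelfDual C')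
    (hneighbor : Module.finrank (ZMod 2) ↥(C ⊓ C') + 1 = Module.finrank (ZMod 2) C') {d : ℕ}
    (hd : 0 < d) (hmin : ∀ c ∈ C', c ≠ 0 → d < hammingNorm c) :
    ∃ y, 1 ⬝ᵥ y = 0 ∧ ∀ c ∈ C, hammingNorm c = d → c ⬝ᵥ y = 1 := by
  obtain ⟨y, hy, hmem⟩ := hC.exists_mem_of_neighbor hC' hneighbor
  refine ⟨y, hC'.dotProduct_eq_zero hC'.one_mem hy, fun c hc hweight => ?_⟩
  refine (eq_zero_or_one _).resolve_left fun hzero => ?_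
  exact (hmin c (hmem c hc hzero) (hammingNorm_pos_iff.mp (hweight ▸ hd))).ne' hweight

theorem sum_sign_dotProduct [Fintype C] [DecidablePred (· ∈ C)] (hC : IsSelfDual C)
    (x : ι → ZMod 2) :
    ∑ c : C, sign (c ⬝ᵥ x) = if x ∈ C then (Fintype.card C : ℤ) else 0 := by
  classical
  let f : C →+ ZMod 2 :=
    { toFun c := c ⬝ᵥ x
      map_zero' := by simp
      map_add' c d := add_dotProduct (c : ι → ZMod 2) d x }
  have htrivial : sign.compAddMonoidHom f = 0 ↔ x ∈ C := by
    have (a : ZMod 2) : sign a = 1 ↔ a = 0 := by revert a; decide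
    rw [hC.mem_iff]
    simp only [DFunLike.ext_iff, AddChar.compAddMonoidHom_apply, AddChar.zero_apply, this,
      Subtype.forall]
    rfl
  simp only [← htrivial]
  exact AddChar.sum_eq_ite (sign.compAddMonoidHom f)

theorem sum_sign_mul_krawtchouk [DecidableEq ι] [Fintype C] [DecidablePred (· ∈ C)]
    (hC : IsSelfDual C) (x : ι → ZMod 2) (k : ℕ) :
    ∑ c : C, sign (c ⬝ᵥ x) * krawtchouk (Fintype.card ι) k (hammingNorm (c : ι → ZMod 2)) =
      Fintype.card C * #{u : ι → ZMod 2 | hammingNorm u = k ∧ x + u ∈ C} := by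
  simp only [← sum_sign_eq_krawtchouk, mul_sum, ← AddChar.map_add_eq_mul, ← dotProduct_add]
  rw [sum_comm, sum_congr rfl fun u _ => hC.sum_sign_dotProduct (x + u), ← sum_filter,
    filter_filter, sum_const, nsmul_eq_mul, mul_comm]

theorem card_mul_le_sum_sign [Fintype C] (hC : IsSelfDual C) (x : ι → ZMod 2) {s : Finset ℕ}
    (hx : hammingNorm x ∈ s) {N : ℕ → ℤ} (hN : ∀ k ∈ s, 0 ≤ N k) :
    Fintype.card C * N (hammingNorm x) ≤
      ∑ c : C, sign (c ⬝ᵥ x) *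
        ∑ k ∈ s, N k * krawtchouk (Fintype.card ι) k (hammingNorm (c : ι → ZMod 2)) := by
  classical
  have hswap : ∑ c : C, sign (c ⬝ᵥ x) *
        ∑ k ∈ s, N k * krawtchouk (Fintype.card ι) k (hammingNorm (c : ι → ZMod 2)) =
      ∑ k ∈ s, N k *
        (Fintype.card C * #{u : ι → ZMod 2 | hammingNorm u = k ∧ x + u ∈ C}) := by
    simp only [← hC.sum_sign_mul_krawtchouk, mul_sum, mul_left_comm (sign _)]
    rw [sum_comm]
  have hself : x + x = 0 := funext fun i => CharTwo.add_self_eq_zero (x i)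
  have hpos : 1 ≤ #{u : ι → ZMod 2 | hammingNorm u = hammingNorm x ∧ x + u ∈ C} :=
    card_pos.mpr ⟨x, by simp [hself]⟩
  rw [hswap]
  refine le_trans ?_ (single_le_sum (fun k hk => mul_nonneg (hN k hk) (by positivity)) hx)
  rw [mul_comm]
  exact mul_le_mul_of_nonneg_left (le_mul_of_one_le_right (by positivity) (mod_cast hpos))
    (hN _ hx)

end IsSelfDual

namespace DoubleCirculant

open Finset
open scoped Matrix Nat

section LinearProgramming

/-- The Krawtchouk coefficients of the polynomial `annihilator`. -/
def annihilatorCoeff : ℕ → ℤ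
  | 0 | 2 => 3712313855250
  | 4 => 716411445750
  | 6 => 586154819250
  | 8 => 108547188750
  | 10 => 65128313250
  | 12 => 11493231750
  | 14 => 3831077250
  | 16 => 638512875
  | _ => 0

/-- A positive multiple of the polynomial `(w - 48) * ∏ m ∈ Icc 5 19, (w - 4 * m)`. It vanishes at
the weights of a doubly even code of length `96` other than `0`, `16`, `80` and `96`, and its
expansion in Krawtchouk polynomials has no negative coefficient. -/
noncomputable def annihilator (w : ℕ) : ℤ :=
  ∑ k ∈ range 17, annihilatorCoeff k * krawtchouk 96 k w

theorem annihilatorCoeff_nonneg (k : ℕ) : 0 ≤ annihilatorCoeff k := by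
  unfold annihilatorCoeff
  split <;> norm_num

-- The kernel evaluates factorials quickly, but not the recursion that defines `Nat.choose`.
theorem annihilator_eq_sum (w : ℕ) :
    annihilator w = ∑ k ∈ range 17, annihilatorCoeff k * ∑ i ∈ range (k + 1), (-1) ^ i *
      ((w.descFactorial i / i ! : ℕ) * ((96 - w).descFactorial (k - i) / (k - i)! : ℕ) : ℤ) := by
  simp only [annihilator, krawtchouk_eq_sum, Nat.choose_eq_descFactorial_div_factorial]

theorem annihilator_zero : annihilator 0 = 2 ^ 47 * annihilatorCoeff 2 := by
  rw [annihilator_eq_sum]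
  decide +kernel

theorem annihilator_ninetySix : annihilator 96 = 2 ^ 47 * annihilatorCoeff 2 := by
  rw [annihilator_eq_sum]
  decide +kernel

theorem annihilator_sixteen_pos : 0 < annihilator 16 := by
  rw [annihilator_eq_sum]
  decide +kernel

theorem annihilator_eighty_pos : 0 < annihilator 80 := by
  rw [annihilator_eq_sum]
  decide +kernel

theorem annihilator_eq_zero : ∀ m ∈ Icc 5 19, annihilator (4 * m) = 0 := by
  simp only [annihilator_eq_sum]
  decide +kernel

end LinearProgramming

end DoubleCirculant

namespace IsSelfDual

open DoubleCirculant Finset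
open scoped Matrix

variable {ι : Type*} [Fintype ι] {C : Submodule (ZMod 2) (ι → ZMod 2)}

theorem hammingNorm_cases (hC : IsSelfDual C) (hcard : Fintype.card ι = 96)
    (hdvd : ∀ c ∈ C, 4 ∣ hammingNorm c) (hmin : ∀ c ∈ C, c ≠ 0 → 16 ≤ hammingNorm c)
    {c : ι → ZMod 2} (hc : c ∈ C) (hzero : c ≠ 0) (hone : c ≠ 1) :
    hammingNorm c = 16 ∨ hammingNorm (c + 1) = 16 ∨
      ∃ m ∈ Icc 5 19, hammingNorm c = 4 * m := by
  have hcompl : 16 ≤ hammingNorm (c + 1) := by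
    refine hmin _ (C.add_mem hc hC.one_mem) fun h => hone (funext fun i => ?_)
    exact CharTwo.add_eq_zero.mp (congrFun h i)
  have hadd := hammingNorm_add_one c
  have hmin := hmin c hc hzero
  obtain ⟨m, hm⟩ := hdvd c hc
  by_cases hm4 : m = 4
  · exact .inl (by lia)
  by_cases hm20 : m = 20
  · exact .inr (.inl (by lia))
  · exact .inr (.inr ⟨m, mem_Icc.mpr (by lia), hm⟩)

theorem sign_mul_annihilator_le (hC : IsSelfDual C) (hcard : Fintype.card ι = 96)
    (hdvd : ∀ c ∈ C, 4 ∣ hammingNorm c) (hmin : ∀ c ∈ C, c ≠ 0 → 16 ≤ hammingNorm c)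
    {x : ι → ZMod 2} (hx : 1 ⬝ᵥ x = 0) (hodd : ∀ c ∈ C, hammingNorm c = 16 → c ⬝ᵥ x = 1)
    {c : ι → ZMod 2} (hc : c ∈ C) (hzero : c ≠ 0) (hone : c ≠ 1) :
    sign (c ⬝ᵥ x) * annihilator (hammingNorm c) ≤ 0 := by
  obtain hw | hw | ⟨m, hm, hw⟩ := hC.hammingNorm_cases hcard hdvd hmin hc hzero hone
  · rw [hodd c hc hw, hw, sign_one]
    linarith [annihilator_sixteen_pos]
  · have hdot := hodd _ (C.add_mem hc hC.one_mem) hw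
    have hweight : hammingNorm c = 80 := by
      have := hammingNorm_add_one c
      lia
    rw [add_dotProduct, hx, add_zero] at hdot
    rw [hdot, hweight, sign_one]
    linarith [annihilator_eighty_pos]
  · rw [hw, annihilator_eq_zero m hm, mul_zero]

theorem sum_sign_mul_annihilator_lt [Fintype C] (hC : IsSelfDual C) (hcard : Fintype.card ι = 96)
    (hdvd : ∀ c ∈ C, 4 ∣ hammingNorm c) (hmin : MinWeightIs C 16)
    {x : ι → ZMod 2} (hx : 1 ⬝ᵥ x = 0) (hodd : ∀ c ∈ C, hammingNorm c = 16 → c ⬝ᵥ x = 1) :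
    ∑ c : C, sign (c ⬝ᵥ x) * annihilator (hammingNorm (c : ι → ZMod 2)) <
      2 ^ 48 * annihilatorCoeff 2 := by
  classical
  obtain ⟨⟨d, hd, hd0, hd16⟩, hmin⟩ := hmin
  have hweight_one : hammingNorm (1 : ι → ZMod 2) = 96 := hammingNorm_one.trans hcard
  have hd1 : d ≠ 1 := by
    rintro rfl
    lia
  let one : C := ⟨1, hC.one_mem⟩
  have hone : (0 : C) ≠ one := fun h => by
    have : (0 : ι → ZMod 2) = 1 := congrArg Subtype.val h
    rw [← this, hammingNorm_zero] at hweight_one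
    lia
  have hsum : ∑ c : C, (if c ∈ ({0, one} : Finset C) then 2 ^ 47 * annihilatorCoeff 2 else 0) =
      2 ^ 48 * annihilatorCoeff 2 := by
    rw [sum_ite_mem, univ_inter, sum_pair hone]
    ring
  rw [← hsum]
  refine sum_lt_sum (fun c _ => ?_) ⟨⟨d, hd⟩, mem_univ _, ?_⟩
  · by_cases hc0 : c = 0
    · simp [hc0, annihilator_zero]
    by_cases hc1 : c = one
    · simp [hc1, one, hx, hweight_one, annihilator_ninetySix]
    · rw [if_neg (by simp [hc0, hc1])]
      exact hC.sign_mul_annihilator_le hcard hdvd hmin hx hodd c.2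
        (fun h => hc0 (Subtype.ext h)) fun h => hc1 (Subtype.ext h)
  · rw [if_neg (by simp [Subtype.ext_iff, one, hd0, hd1]), hodd d hd hd16, hd16, sign_one]
    linarith [annihilator_sixteen_pos]

theorem not_forall_dotProduct_eq_one (hC : IsSelfDual C) (hcard : Fintype.card ι = 96)
    (hdvd : ∀ c ∈ C, 4 ∣ hammingNorm c) (hmin : MinWeightIs C 16) {x : ι → ZMod 2}
    (hx : hammingNorm x = 2) : ¬∀ c ∈ C, hammingNorm c = 16 → c ⬝ᵥ x = 1 := by
  classical
  intro hodd
  have hone : 1 ⬝ᵥ x = 0 := by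
    rw [← natCast_hammingNorm, hx]
    rfl
  have hcardC : Fintype.card C = 2 ^ 48 := by
    rw [Module.card_eq_pow_finrank (K := ZMod 2), ZMod.card]
    have := hC.two_mul_finrank
    congr
    lia
  have hlower := hC.card_mul_le_sum_sign x (s := range 17) (by simp [hx])
    fun k _ => annihilatorCoeff_nonneg k
  rw [hcard, hx, hcardC] at hlower
  exact (hC.sum_sign_mul_annihilator_lt hcard hdvd hmin hone hodd).not_ge (mod_cast hlower)

end IsSelfDual

namespace DoubleCirculant

open AddMonoidAlgebra Finset
open scoped Matrix

section Generator

variable {n : ℕ} {M : Matrix (Fin n) (Fin n) (ZMod 2)}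

theorem mem_pureDCC_iff {x : Fin n ⊕ Fin n → ZMod 2} :
    x ∈ pureDCC M ↔ ∃ a, Sum.elim a (a ᵥ* M) = x := by
  rw [pureDCC, Submodule.mem_span_range_iff_exists_fun]
  refine exists_congr fun a => Eq.congr_left ?_
  ext (i | i) <;> simp [Matrix.vecMul, dotProduct]

theorem row_mem_pureDCC (i : Fin n) : Sum.elim (Pi.single i 1) (M i) ∈ pureDCC M :=
  mem_pureDCC_iff.mpr ⟨Pi.single i 1, by rw [Matrix.single_one_vecMul]; rfl⟩

theorem mul_transpose_eq_one (hM : IsSelfDual (pureDCC M)) : M * Mᵀ = 1 := by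
  ext i j
  have h := hM.dotProduct_eq_zero (row_mem_pureDCC i) (row_mem_pureDCC j)
  rw [sumElim_dotProduct_sumElim, single_one_dotProduct, CharTwo.add_eq_zero] at h
  rw [Matrix.mul_apply', Matrix.one_apply, ← Pi.single_apply]
  exact h.symm

end Generator

section Pure

variable {n : ℕ} {v : Fin n → ZMod 2}

/-- The element `∑ g, v (-g) X ^ g` of the group algebra, multiplication by which is the
circulant matrix with first column `v`. -/
noncomputable def symbol (v : Fin n → ZMod 2) : (ZMod 2)[Fin n] :=
  ofCoeff (Finsupp.equivFunOnFinite.symm fun g => v (-g))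

theorem coeff_symbol (v : Fin n → ZMod 2) (g : Fin n) : (symbol v).coeff g = v (-g) :=
  rfl

variable [NeZero n]

theorem coeff_mul_symbol (a : (ZMod 2)[Fin n]) :
    ⇑(a * symbol v).coeff = a.coeff ᵥ* Matrix.circulant v := by
  ext g
  simp only [coeff_mul_eq_sum, coeff_symbol, neg_sub, Matrix.vecMul, dotProduct,
    Matrix.circulant_apply]

theorem isUnitary_symbol (h : Matrix.circulant v * (Matrix.circulant v)ᵀ = 1) :
    IsUnitary (symbol v) := by
  ext g
  have hg := congrFun₂ h 0 g
  simpa [Matrix.mul_apply, coeff_mul_eq_sum, coeff_adjoint, coeff_symbol, one_def,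
    Finsupp.single_apply, Matrix.one_apply] using hg

theorem hasOddFunctional_symbol {d : ℕ} (hC : IsSelfDual (pureDCC (Matrix.circulant v)))
    (hmin : ∀ c ∈ pureDCC (Matrix.circulant v), c ≠ 0 → d ≤ hammingNorm c)
    {y : Fin n ⊕ Fin n → ZMod 2}
    (hy : ∀ c ∈ pureDCC (Matrix.circulant v), hammingNorm c = d → c ⬝ᵥ y = 1) :
    HasOddFunctional 1 d (symbol v) := by
  let word (a : (ZMod 2)[Fin n]) : Fin n ⊕ Fin n → ZMod 2 :=
    Sum.elim a.coeff (a * symbol v).coeff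
  have hmem (a : (ZMod 2)[Fin n]) : word a ∈ pureDCC (Matrix.circulant v) :=
    mem_pureDCC_iff.mpr ⟨a.coeff, by rw [← coeff_mul_symbol]⟩
  have hweight (a : (ZMod 2)[Fin n]) :
      hammingNorm (word a) = 1 * (weight a + weight (a * symbol v)) := by
    rw [hammingNorm_sumElim, ← weight_eq_hammingNorm, ← weight_eq_hammingNorm, one_mul]
  have hlight (a : (ZMod 2)[Fin n]) (ha : IsLight 1 d (symbol v) a) :
      hammingNorm (word a) = d := by
    refine ((hweight a).trans_le ha.2).antisymm (hmin _ (hmem a) fun h => ha.1 ?_)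
    ext g
    exact congrFun h (.inl g)
  refine ⟨isUnitary_symbol (mul_transpose_eq_one hC), fun a ha => hweight a ▸ hlight a ha, ?_⟩
  let φ : (ZMod 2)[Fin n] →+ ZMod 2 :=
      { toFun a := word a ⬝ᵥ y
        map_zero' := by simp [word, dotProduct]
        map_add' a b := by
          rw [← add_dotProduct]
          congr 1
          ext (g | g) <;> simp [word, add_mul] }
  exact ⟨φ, fun a ha => hy _ (hmem a) (hlight a ha)⟩

theorem not_forall_dotProduct_eq_one_of_pureDCC {v : Fin 48 → ZMod 2}
    (hC : IsSelfDual (pureDCC (Matrix.circulant v)))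
    (hmin : MinWeightIs (pureDCC (Matrix.circulant v)) 16) (y : Fin 48 ⊕ Fin 48 → ZMod 2) :
    ¬∀ c ∈ pureDCC (Matrix.circulant v), hammingNorm c = 16 → c ⬝ᵥ y = 1 := by
  intro hy
  obtain ⟨t, ht, -⟩ := covers_fortyEight _ (hasOddFunctional_symbol hC hmin.2 hy) rfl
  exact List.not_mem_nil ht

end Pure

section Bordered

variable {n : ℕ}

theorem hammingNorm_single_one (i : Fin n) : hammingNorm (Pi.single i 1 : Fin n → ZMod 2) = 1 := by
  simp [hammingNorm, Pi.single_apply, filter_eq']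

theorem hammingNorm_vecCons (a : ZMod 2) (x : Fin n → ZMod 2) :
    hammingNorm (Matrix.vecCons a x) = a.val + hammingNorm x := by
  simp [hammingNorm_eq_sum_val, Fin.sum_univ_succ]

/-- The permutation of the coordinates of a bordered code that fixes the border and shifts the
other coordinates cyclically by `k`. -/
def borderShift [NeZero n] (k : Fin n) : Equiv.Perm (Fin (n + 1)) :=
  Equiv.Perm.decomposeFin.symm (0, Equiv.addRight k)

variable [NeZero n]

theorem hammingNorm_circulant (v : Fin n → ZMod 2) (i : Fin n) :
    hammingNorm (Matrix.circulant v i) = hammingNorm v :=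
  hammingNorm_comp_equiv v (Equiv.subLeft i)

theorem hammingNorm_modEq_two (hn : n ≡ 3 [MOD 4]) {v : Fin n → ZMod 2} (hv : 1 ⬝ᵥ v = 0)
    (hrow : ∀ i j, i ≠ j → Matrix.circulant v i ⬝ᵥ Matrix.circulant v j = 1) :
    hammingNorm v ≡ 2 [MOD 4] := by
  refine card_modEq_two_of_odd_autocorrelation (by rwa [Fintype.card_fin]) ?_ fun k hk => ?_
  · rwa [← ZMod.natCast_eq_zero_iff_even, ← hammingNorm, natCast_hammingNorm]
  · rw [← ZMod.natCast_eq_one_iff_odd, natCast_autocorrelation, ← hrow 0 (-k) (by simpa using hk)]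
    refine Fintype.sum_equiv (Equiv.neg _) _ _ fun g => ?_
    simp [neg_add_eq_sub]

theorem borderShift_zero (k : Fin n) : borderShift k 0 = 0 := by
  simp [borderShift]

theorem borderShift_succ (k i : Fin n) : borderShift k i.succ = (i + k).succ := by
  simp [borderShift]

end Bordered

end DoubleCirculant

namespace IsBorderMatrix

open DoubleCirculant Finset
open scoped Matrix

variable {n : ℕ} {B : Matrix (Fin (n + 1)) (Fin (n + 1)) (ZMod 2)}

theorem row_zero (hB : IsBorderMatrix B) : B 0 = Matrix.vecCons 0 1 :=
  funext (Fin.cases hB.1 fun j => hB.2.1 _ j.succ_ne_zero)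

theorem exists_row_succ (hB : IsBorderMatrix B) :
    ∃ v : Fin n → ZMod 2, ∀ i : Fin n, B i.succ = Matrix.vecCons 1 (Matrix.circulant v i) := by
  obtain ⟨-, -, hcol, _, ⟨v, rfl⟩, hv⟩ := hB
  exact ⟨v, fun i => funext (Fin.cases (hcol _ i.succ_ne_zero) (hv i))⟩

variable {x y : Fin (n + 1) ⊕ Fin (n + 1) → ZMod 2}

theorem inr_zero_eq_sum (hB : IsBorderMatrix B) (hx : x ∈ borderedDCC B) :
    x (.inr 0) = ∑ i : Fin n, x (.inl i.succ) := by
  obtain ⟨a, rfl⟩ := mem_pureDCC_iff.mp hx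
  obtain ⟨hzero, -, hcol, -⟩ := hB
  simp [Matrix.vecMul, dotProduct, Fin.sum_univ_succ, hzero, hcol]

theorem inl_zero_eq_sum (hB : IsBorderMatrix B) (hC : IsSelfDual (borderedDCC B))
    (hx : x ∈ borderedDCC B) : x (.inl 0) = ∑ i : Fin n, x (.inr i.succ) := by
  have h := hC.dotProduct_eq_zero (row_mem_pureDCC 0) hx
  rw [← Sum.elim_comp_inl_inr x, sumElim_dotProduct_sumElim, single_one_dotProduct,
    CharTwo.add_eq_zero, hB.row_zero] at h
  simpa [dotProduct, Fin.sum_univ_succ] using h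

variable [NeZero n]

theorem four_dvd_hammingNorm (hB : IsBorderMatrix B) (hn : n ≡ 3 [MOD 4])
    (hC : IsSelfDual (borderedDCC B)) (hx : x ∈ borderedDCC B) : 4 ∣ hammingNorm x := by
  obtain ⟨v, hv⟩ := hB.exists_row_succ
  have horth {i j : Fin (n + 1)} (hij : i ≠ j) : B i ⬝ᵥ B j = 0 := by
    rw [← Matrix.one_apply_ne hij, ← mul_transpose_eq_one hC, Matrix.mul_apply']
    rfl
  have hweight : hammingNorm v ≡ 2 [MOD 4] := by
    refine hammingNorm_modEq_two hn ?_ fun i j hij => ?_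
    · rw [← natCast_hammingNorm, ← hammingNorm_circulant v 0, natCast_hammingNorm]
      have := horth (Fin.succ_ne_zero (0 : Fin n)).symm
      rwa [hB.row_zero, hv, Matrix.cons_dotProduct_cons, zero_mul, zero_add] at this
    · have := horth ((Fin.succ_injective n).ne hij)
      rw [hv, hv, Matrix.cons_dotProduct_cons, mul_one, CharTwo.add_eq_zero] at this
      exact this.symm
  refine hC.four_dvd_hammingNorm ?_ hx
  rintro _ ⟨i, rfl⟩
  have hsingle : (fun j => if j = i then (1 : ZMod 2) else 0) = Pi.single i 1 := by
    ext j
    exact (Pi.single_apply _ _ _).symm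
  rw [hammingNorm_sumElim, hsingle, hammingNorm_single_one]
  rw [Nat.ModEq] at hn hweight
  induction i using Fin.cases with
  | zero =>
    rw [hB.row_zero, hammingNorm_vecCons, hammingNorm_one, Fintype.card_fin, ZMod.val_zero]
    lia
  | succ i =>
    rw [hv, hammingNorm_vecCons, hammingNorm_circulant, ZMod.val_one]
    lia

theorem submatrix_borderShift (hB : IsBorderMatrix B) (k : Fin n) :
    B.submatrix (borderShift k) (borderShift k) = B := by
  obtain ⟨v, hv⟩ := hB.exists_row_succ
  ext i j
  induction i using Fin.cases <;> induction j using Fin.cases <;>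
    simp [borderShift_zero, borderShift_succ, hB.row_zero, hv]

theorem comp_borderShift_mem (hB : IsBorderMatrix B) (hx : x ∈ borderedDCC B) (k : Fin n) :
    x ∘ Sum.map (borderShift k) (borderShift k) ∈ borderedDCC B := by
  obtain ⟨a, rfl⟩ := mem_pureDCC_iff.mp hx
  refine mem_pureDCC_iff.mpr ⟨a ∘ borderShift k, ?_⟩
  rw [Sum.elim_comp_map]
  congr 1
  conv_lhs => rw [← hB.submatrix_borderShift k]
  rw [Matrix.submatrix_vecMul_equiv]
  simp [Function.comp_assoc]

theorem sum_comp_borderShift (hB : IsBorderMatrix B) (hC : IsSelfDual (borderedDCC B))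
    (hn : Odd n) (hx : x ∈ borderedDCC B) :
    ∑ k : Fin n, x ∘ Sum.map (borderShift k) (borderShift k) =
      Sum.elim (Matrix.vecCons (x (.inl 0)) fun _ => x (.inr 0))
        (Matrix.vecCons (x (.inr 0)) fun _ => x (.inl 0)) := by
  have hcast : (n : ZMod 2) = 1 := ZMod.natCast_eq_one_iff_odd.mpr hn
  ext (i | i) <;> rw [Finset.sum_apply]
  · induction i using Fin.cases with
    | zero => simp [borderShift_zero, hcast]
    | succ i =>
      simpa [borderShift_succ, hB.inr_zero_eq_sum hx] using
        Equiv.sum_comp (Equiv.addLeft i) fun j => x (.inl j.succ)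
  · induction i using Fin.cases with
    | zero => simp [borderShift_zero, hcast]
    | succ i =>
      simpa [borderShift_succ, hB.inl_zero_eq_sum hC hx] using
        Equiv.sum_comp (Equiv.addLeft i) fun j => x (.inr j.succ)

theorem add_eq_one (hB : IsBorderMatrix B) (hC : IsSelfDual (borderedDCC B)) (hn : Odd n)
    (hx : x ∈ borderedDCC B) (hy : 1 ⬝ᵥ y = 0)
    (hodd : ∀ k, (x ∘ Sum.map (borderShift k) (borderShift k)) ⬝ᵥ y = 1) :
    x (.inl 0) + x (.inr 0) = 1 := by
  have hsum := congrArg (· ⬝ᵥ y) (hB.sum_comp_borderShift hC hn hx)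
  simp only [sum_dotProduct, hodd, sum_const, card_univ, Fintype.card_fin, nsmul_one,
    ZMod.natCast_eq_one_iff_odd.mpr hn] at hsum
  simp only [dotProduct, Fintype.sum_sum_type, Fin.sum_univ_succ, Sum.elim_inl, Sum.elim_inr,
    Matrix.cons_val_zero, Matrix.cons_val_succ, ← mul_sum] at hsum
  simp only [one_dotProduct, Fintype.sum_sum_type, Fin.sum_univ_succ] at hy
  have (p q a b c d : ZMod 2) :
      1 = p * a + q * b + (q * c + p * d) → a + b + (c + d) = 0 → p + q = 1 := by
    revert p q a b c d; decide
  exact this _ _ _ _ _ _ hsum hy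

theorem not_forall_dotProduct_eq_one {B : Matrix (Fin 48) (Fin 48) (ZMod 2)}
    (hB : IsBorderMatrix (n := 47) B) (hC : IsSelfDual (borderedDCC (n := 47) B))
    (hmin : MinWeightIs (borderedDCC (n := 47) B) 16) {y : Fin 48 ⊕ Fin 48 → ZMod 2}
    (hy : 1 ⬝ᵥ y = 0) :
    ¬∀ c ∈ borderedDCC (n := 47) B, hammingNorm c = 16 → c ⬝ᵥ y = 1 := by
  intro hodd
  let e : Fin 48 ⊕ Fin 48 → ZMod 2 := Sum.elim (Pi.single 0 1) (Pi.single 0 1)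
  have he : hammingNorm e = 2 := by
    rw [hammingNorm_sumElim, hammingNorm_single_one]
  refine hC.not_forall_dotProduct_eq_one rfl (fun c hc => hB.four_dvd_hammingNorm rfl hC hc) hmin
    he fun c hc hweight => ?_
  have hshift (k : Fin 47) : (c ∘ Sum.map (borderShift k) (borderShift k)) ⬝ᵥ y = 1 := by
    refine hodd _ (hB.comp_borderShift_mem hc k) ?_
    rw [← hweight]
    exact hammingNorm_comp_equiv c ((borderShift k).sumCongr (borderShift k))
  rw [← hB.add_eq_one hC (by decide) hc hy hshift, ← Sum.elim_comp_inl_inr c,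
    sumElim_dotProduct_sumElim, dotProduct_single_one, dotProduct_single_one]
  rfl

end IsBorderMatrix

theorem no_selfdual_neighbor_96_min18 (C : Submodule (ZMod 2) (Fin 48 ⊕ Fin 48 → ZMod 2))
    (hdcc : (∃ R : Matrix (Fin 48) (Fin 48) (ZMod 2), IsCirculant R ∧ C = pureDCC R) ∨
      (∃ B : Matrix (Fin 48) (Fin 48) (ZMod 2), IsBorderMatrix (n := 47) B ∧ C = borderedDCC (n := 47) B))
    (hsd : IsSelfDual C) (hmin : MinWeightIs C 16)
    (C' : Submodule (ZMod 2) (Fin 48 ⊕ Fin 48 → ZMod 2)) (hC' : IsSelfDual C')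
    (hnb : Module.finrank (ZMod 2) ↥(C ⊓ C') = 47) :
    ∃ x ∈ C', x ≠ 0 ∧ hammingNorm x ≤ 16 := by
  by_contra! hlight
  have hfinrank : 2 * Module.finrank (ZMod 2) C' = 96 := hC'.two_mul_finrank
  obtain ⟨y, hy, hodd⟩ :=
    hsd.exists_dotProduct_eq_one_of_neighbor hC' (by lia) (by norm_num) hlight
  obtain ⟨_, ⟨v, rfl⟩, rfl⟩ | ⟨B, hB, rfl⟩ := hdcc
  · exact DoubleCirculant.not_forall_dotProduct_eq_one_of_pureDCC hsd hmin y hodd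
  · exact hB.not_forall_dotProduct_eq_one hsd hmin hy hodd
end

section
/- Let C and C' be self-dual binary codes of length n (n even) with dim(C ∩ C') = n/2 − 1, let d be the minimum weight of C, and suppose the minimum weight of C' is at least d + 2. Then there exists a vector x ∈ F_2^n such that c·x = 1 for every codeword c of C of Hamming weight d (indeed any x ∈ C' \ C works). -/
/-!
Fix `x ∈ C' \ C`. The functional `c ↦ c · x` on `C` vanishes on `C ∩ C'`, because `C'` is
self-orthogonal, but not on all of `C`, because `x ∉ C = C^⊥`. As `C ∩ C'` has codimension at most
one in `C`, it is exactly the kernel of the functional. Codewords of `C` of weight `d` are not in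
`C'`, so the functional takes the value `1` on them.
-/

open Module
open LinearMap (BilinForm)

theorem wcovBy_of_finrank_le_finrank_add_one {K V : Type*} [DivisionRing K] [AddCommGroup V]
    [Module K V] {W U : Submodule K V} [Module.Finite K U] (hWU : W ≤ U)
    (h : finrank K U ≤ finrank K W + 1) : W ⩿ U := by
  refine ⟨hWU, fun T hWT hTU => ?_⟩
  have : Module.Finite K T := Submodule.finiteDimensional_of_le hTU.le
  have hWT' := Submodule.finrank_lt_finrank_of_lt hWT
  have hTU' := Submodule.finrank_lt_finrank_of_lt hTU
  omega

theorem two_mul_finrank_le_of_le_orthogonal {K V : Type*} [Field K] [AddCommGroup V] [Module K V]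
    [FiniteDimensional K V] {B : BilinForm K V} (hB : B.Nondegenerate) {W : Submodule K V}
    (hW : W ≤ B.orthogonal W) :
    2 * finrank K W ≤ finrank K V := by
  have hle := Submodule.finrank_mono hW
  rw [BilinForm.finrank_orthogonal hB] at hle
  omega

theorem apply_ne_zero_of_inf_wcovBy {R M : Type*} [CommSemiring R] [AddCommMonoid M] [Module R M]
    {B : BilinForm R M} {U W : Submodule R M} (hU : B.orthogonal U ≤ U)
    (hW : W ≤ B.orthogonal W) (hUW : U ⊓ W ⩿ U) {u w : M} (huU : u ∈ U) (huW : u ∉ W)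
    (hwW : w ∈ W) (hwU : w ∉ U) : B u w ≠ 0 := by
  intro hzero
  set N := U ⊓ LinearMap.ker (B.flip w)
  have hUN : U ⊓ W ≤ N := fun v hv => ⟨hv.1, hW hwW v hv.2⟩
  have huN : u ∈ N := ⟨huU, hzero⟩
  have hlt : U ⊓ W < N := SetLike.lt_iff_le_and_exists.2 ⟨hUN, u, huN, fun hu => huW hu.2⟩
  have hN : N = U := (hUW.eq_or_eq hUN inf_le_left).resolve_left hlt.ne'
  have hker : U ≤ LinearMap.ker (B.flip w) := inf_eq_left.1 hN
  exact hwU (hU fun v hv => hker hv)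

theorem nondegenerate_dotProductBilin (R ι : Type*) [CommSemiring R] [Fintype ι] :
    (dotProductBilin R R : BilinForm R (ι → R)).Nondegenerate :=
  ⟨dotProduct_eq_zero, fun y hy => dotProduct_eq_zero y fun x =>
    (dotProduct_comm y x).trans (hy x)⟩

section SelfDual

variable {ι : Type*} [Fintype ι] {C C' : Submodule (ZMod 2) (ι → ZMod 2)}

theorem isSelfDual_iff_orthogonal_eq :
    IsSelfDual C ↔ BilinForm.orthogonal (dotProductBilin (ZMod 2) (ZMod 2)) C = C := by
  have hmem : ∀ x, x ∈ BilinForm.orthogonal (dotProductBilin (ZMod 2) (ZMod 2)) C ↔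
      ∀ y ∈ C, dot x y = 0 := fun x =>
    forall₂_congr fun y _ => Eq.congr_left (dotProduct_comm y x)
  simp only [IsSelfDual, SetLike.ext_iff, hmem, iff_comm]

namespace IsSelfDual

theorem two_mul_finrank_le (hC : IsSelfDual C) : 2 * finrank (ZMod 2) C ≤ Fintype.card ι := by
  rw [← finrank_fintype_fun_eq_card (ZMod 2)]
  exact two_mul_finrank_le_of_le_orthogonal (nondegenerate_dotProductBilin _ _)
    (isSelfDual_iff_orthogonal_eq.1 hC).ge

theorem eq_of_le (hC : IsSelfDual C) (hC' : IsSelfDual C') (h : C' ≤ C) : C' = C := by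
  rw [isSelfDual_iff_orthogonal_eq] at hC hC'
  refine h.antisymm ?_
  rw [← hC, ← hC']
  exact BilinForm.orthogonal_le h

theorem dot_eq_one (hC : IsSelfDual C) (hC' : IsSelfDual C')
    (hnb : finrank (ZMod 2) ↥(C ⊓ C') = Fintype.card ι / 2 - 1) {c x : ι → ZMod 2}
    (hcC : c ∈ C) (hcC' : c ∉ C') (hxC' : x ∈ C') (hxC : x ∉ C) : dot c x = 1 := by
  have hdim := hC.two_mul_finrank_le
  have hcov : C ⊓ C' ⩿ C := wcovBy_of_finrank_le_finrank_add_one inf_le_left (by omega)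
  have hne : dot c x ≠ 0 := apply_ne_zero_of_inf_wcovBy (isSelfDual_iff_orthogonal_eq.1 hC).le
    (isSelfDual_iff_orthogonal_eq.1 hC').ge hcov hcC hcC' hxC' hxC
  exact Fin.eq_one_of_ne_zero _ hne

end IsSelfDual

theorem neighbor_gives_solution_general (hC : IsSelfDual C) (hC' : IsSelfDual C')
    (hnb : finrank (ZMod 2) ↥(C ⊓ C') = Fintype.card ι / 2 - 1) {d : ℕ}
    (hd : ∀ x ∈ C', hammingNorm x ≠ d) :
    (∃ x : ι → ZMod 2, ∀ c ∈ C, hammingNorm c = d → dot c x = 1) ∧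
    ∀ x ∈ C', x ∉ C → ∀ c ∈ C, hammingNorm c = d → dot c x = 1 := by
  have hdot : ∀ x ∈ C', x ∉ C → ∀ c ∈ C, hammingNorm c = d → dot c x = 1 :=
    fun x hxC' hxC c hcC hcd => hC.dot_eq_one hC' hnb hcC (fun hcC' => hd c hcC' hcd) hxC' hxC
  refine ⟨?_, hdot⟩
  by_cases hle : C' ≤ C
  · obtain rfl := hC.eq_of_le hC' hle
    exact ⟨0, fun c hc hcd => absurd hcd (hd c hc)⟩
  · obtain ⟨x, hxC', hxC⟩ := SetLike.not_le_iff_exists.1 hle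
    exact ⟨x, hdot x hxC' hxC⟩

end SelfDual

theorem neighbor_gives_solution {n : ℕ} (hn : Even n)
    (C C' : Submodule (ZMod 2) (Fin n → ZMod 2))
    (hC : IsSelfDual C) (hC' : IsSelfDual C')
    (hnb : Module.finrank (ZMod 2) ↥(C ⊓ C') = n / 2 - 1)
    (d : ℕ) (hd : MinWeightIs C d)
    (hd' : ∀ x ∈ C', x ≠ 0 → d + 2 ≤ hammingNorm x) :
    (∃ x : Fin n → ZMod 2, ∀ c ∈ C, hammingNorm c = d → dot c x = 1) ∧
    ∀ x ∈ C', x ∉ C → ∀ c ∈ C, hammingNorm c = d → dot c x = 1 := by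
  obtain ⟨⟨c, -, hc0, rfl⟩, -⟩ := hd
  have hweight : ∀ x ∈ C', hammingNorm x ≠ hammingNorm c := fun x hx hxc =>
    have hx0 : x ≠ 0 := hammingNorm_ne_zero_iff.1 (hxc ▸ hammingNorm_ne_zero_iff.2 hc0)
    (hd' x hx hx0).not_gt (by omega)
  exact neighbor_gives_solution_general hC hC' (by rwa [Fintype.card_fin]) hweight
end

section
/- Let C be a self-dual binary code of length n (n even) with minimum weight d, and let x ∈ F_2^n be a vector of even Hamming weight such that c·x = 1 for every codeword c of C of weight d. Then C_0 = {c ∈ C : c·x = 0} is a subcode of C of dimension n/2 − 1, the code D = C_0 + span{x} is a self-dual code of length n with dim(C ∩ D) = n/2 − 1 (so D is a self-dual neighbor of C), and D contains no codeword of C of weight d. -/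
/-- The linear functional `c ↦ c · x`. -/
def dotL {ι : Type*} [Fintype ι] (x : ι → ZMod 2) : (ι → ZMod 2) →ₗ[ZMod 2] ZMod 2 where
  toFun c := dot c x
  map_add' a b := by
    simp [dot, add_mul, Finset.sum_add_distrib]
  map_smul' r a := by
    simp [dot, Finset.mul_sum, mul_assoc]

/-!
For a nondegenerate reflexive form on a finite-dimensional space, let `L = Lᗮ` and `W ≤ Wᗮ`. Then
`(L ⊓ Wᗮ ⊔ W)ᗮ = (L ⊔ W) ⊓ Wᗮ = L ⊓ Wᗮ ⊔ W` by biduality and the modular law. A binary vector `x`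
is isotropic exactly when its weight is even, so `W = ⟨x⟩` gives a self-dual code `D ≤ ⟨x⟩ᗮ`.
Hence `C ⊓ D` is the section of `C` by the hyperplane `⟨x⟩ᗮ`, which contains no codeword of
weight `d`; it is proper because such codewords exist.
-/

section BilinForm

open LinearMap.BilinForm

variable {R M : Type*} [CommSemiring R] [AddCommMonoid M] [Module R M]
  (B : LinearMap.BilinForm R M)

theorem orthogonal_sup (N L : Submodule R M) :
    B.orthogonal (N ⊔ L) = B.orthogonal N ⊓ B.orthogonal L := by
  refine le_antisymm (le_inf (orthogonal_le le_sup_left) (orthogonal_le le_sup_right)) ?_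
  rintro m ⟨hN, hL⟩ _ hv
  obtain ⟨y, hy, z, hz, rfl⟩ := Submodule.mem_sup.1 hv
  rw [map_add, LinearMap.add_apply, hN y hy, hL z hz, add_zero]

theorem mem_orthogonal_span_singleton_iff {x y : M} :
    y ∈ B.orthogonal (Submodule.span R {x}) ↔ B x y = 0 := by
  refine ⟨fun h => h x (Submodule.mem_span_singleton_self x), fun h v hv => ?_⟩
  obtain ⟨r, rfl⟩ := Submodule.mem_span_singleton.1 hv
  rw [map_smul, LinearMap.smul_apply, h, smul_zero]

end BilinForm

section VectorSpace

open Module LinearMap.BilinForm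

variable {K V : Type*} [Field K] [AddCommGroup V] [Module K V]
  {B : LinearMap.BilinForm K V} {L W : Submodule K V}

theorem finrank_inf_ker_add_one [FiniteDimensional K L] {f : Dual K V} {v : V}
    (hv : v ∈ L) (hfv : f v ≠ 0) :
    finrank K ↥(L ⊓ LinearMap.ker f) + 1 = finrank K L := by
  have hne : f.domRestrict L ≠ 0 := fun h => hfv (LinearMap.congr_fun h ⟨v, hv⟩)
  rw [← Dual.finrank_ker_add_one_of_ne_zero hne, LinearMap.ker_domRestrict,
    ← Submodule.map_comap_subtype, Submodule.finrank_map_subtype_eq]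

variable [FiniteDimensional K V]

theorem two_mul_finrank_of_orthogonal_eq_self (hB : B.Nondegenerate)
    (hL : B.orthogonal L = L) : 2 * finrank K L = finrank K V := by
  have hdim := finrank_orthogonal hB L
  have hle := Submodule.finrank_le L
  rw [hL] at hdim
  omega

theorem orthogonal_inf_orthogonal_sup_eq_self (hB : B.Nondegenerate) (hrefl : B.IsRefl)
    (hL : B.orthogonal L = L) (hW : W ≤ B.orthogonal W) :
    B.orthogonal (L ⊓ B.orthogonal W ⊔ W) = L ⊓ B.orthogonal W ⊔ W := by
  have hperp : B.orthogonal (L ⊓ B.orthogonal W) = L ⊔ W := by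
    conv_lhs => rw [← hL, ← orthogonal_sup, orthogonal_orthogonal hB hrefl]
  calc
    B.orthogonal (L ⊓ B.orthogonal W ⊔ W) = (L ⊔ W) ⊓ B.orthogonal W := by
      rw [orthogonal_sup, hperp]
    _ = W ⊔ L ⊓ B.orthogonal W := by rw [sup_comm, sup_inf_assoc_of_le L hW]
    _ = L ⊓ B.orthogonal W ⊔ W := sup_comm _ _

end VectorSpace

section Codes

open Module

variable {ι : Type*} [Fintype ι] {C : Submodule (ZMod 2) (ι → ZMod 2)} {x : ι → ZMod 2}

variable (ι) in
/-- The standard inner product `dot` as a bilinear form, which makes the theory of orthogonal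
complements available for dual codes. -/
def dotForm : LinearMap.BilinForm (ZMod 2) (ι → ZMod 2) :=
  dotProductBilin (ZMod 2) (ZMod 2)

theorem dotForm_apply (x y : ι → ZMod 2) : dotForm ι x y = dot x y := rfl

theorem dot_comm (x y : ι → ZMod 2) : dot x y = dot y x := dotProduct_comm x y

theorem isRefl_dotForm : (dotForm ι).IsRefl := fun x y h => (dot_comm y x).trans h

theorem nondegenerate_dotForm : (dotForm ι).Nondegenerate :=
  isRefl_dotForm.nondegenerate_iff_separatingLeft.2 dotProduct_eq_zero

theorem dot_self (x : ι → ZMod 2) : dot x x = hammingNorm x := by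
  have hsq : ∀ a : ZMod 2, a * a = if a ≠ 0 then 1 else 0 := by decide
  simp only [dot, hammingNorm, hsq, Finset.sum_boole]

theorem isSelfDual_iff_orthogonal_eq_self : IsSelfDual C ↔ (dotForm ι).orthogonal C = C := by
  simp only [IsSelfDual, SetLike.ext_iff, LinearMap.BilinForm.mem_orthogonal_iff,
    dotForm_apply, dot_comm, iff_comm]

theorem ker_dotL_eq_orthogonal_span (x : ι → ZMod 2) :
    LinearMap.ker (dotL x) = (dotForm ι).orthogonal (Submodule.span (ZMod 2) {x}) := by
  ext y
  rw [mem_orthogonal_span_singleton_iff, dotForm_apply, dot_comm]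
  rfl

theorem IsSelfDual.two_mul_finrank_s19 (hC : IsSelfDual C) :
    2 * finrank (ZMod 2) C = Fintype.card ι := by
  rw [two_mul_finrank_of_orthogonal_eq_self nondegenerate_dotForm
    (isSelfDual_iff_orthogonal_eq_self.1 hC), finrank_fintype_fun_eq_card]

/-- The neighbor of `C` determined by `x`: the code `C₀ + ⟨x⟩`, where `C₀` consists of the
codewords of `C` orthogonal to `x`. When `x ∈ C` and `C` is self-dual, this is `C` itself. -/
def neighbor (C : Submodule (ZMod 2) (ι → ZMod 2)) (x : ι → ZMod 2) :
    Submodule (ZMod 2) (ι → ZMod 2) :=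
  (C ⊓ LinearMap.ker (dotL x)) ⊔ Submodule.span (ZMod 2) {x}

theorem span_singleton_le_ker_dotL (hx : Even (hammingNorm x)) :
    Submodule.span (ZMod 2) {x} ≤ LinearMap.ker (dotL x) := by
  rw [Submodule.span_singleton_le_iff_mem]
  exact (dot_self x).trans (ZMod.natCast_eq_zero_iff_even.2 hx)

theorem neighbor_le_ker_dotL (hx : Even (hammingNorm x)) :
    neighbor C x ≤ LinearMap.ker (dotL x) :=
  sup_le inf_le_right (span_singleton_le_ker_dotL hx)

theorem inf_neighbor (hx : Even (hammingNorm x)) :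
    C ⊓ neighbor C x = C ⊓ LinearMap.ker (dotL x) :=
  le_antisymm (inf_le_inf_left C (neighbor_le_ker_dotL hx)) (le_inf inf_le_left le_sup_left)

theorem isSelfDual_neighbor (hC : IsSelfDual C) (hx : Even (hammingNorm x)) :
    IsSelfDual (neighbor C x) := by
  have hW := span_singleton_le_ker_dotL hx
  rw [ker_dotL_eq_orthogonal_span] at hW
  rw [isSelfDual_iff_orthogonal_eq_self] at hC ⊢
  rw [neighbor, ker_dotL_eq_orthogonal_span]
  exact orthogonal_inf_orthogonal_sup_eq_self nondegenerate_dotForm isRefl_dotForm hC hW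

theorem IsSelfDual.finrank_inf_ker_dotL (hC : IsSelfDual C) {c : ι → ZMod 2} (hc : c ∈ C)
    (hcx : dot c x ≠ 0) :
    finrank (ZMod 2) ↥(C ⊓ LinearMap.ker (dotL x)) = Fintype.card ι / 2 - 1 := by
  have hker : finrank (ZMod 2) ↥(C ⊓ LinearMap.ker (dotL x)) + 1 = finrank (ZMod 2) C :=
    finrank_inf_ker_add_one hc hcx
  have hdim := hC.two_mul_finrank_s19
  omega

theorem neighbor_construction_general {d : ℕ} (hC : IsSelfDual C)
    (hd : ∃ c ∈ C, hammingNorm c = d) (hx : Even (hammingNorm x))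
    (hdot : ∀ c ∈ C, hammingNorm c = d → dot c x = 1) :
    finrank (ZMod 2) ↥(C ⊓ LinearMap.ker (dotL x)) = Fintype.card ι / 2 - 1 ∧
    IsSelfDual (neighbor C x) ∧
    finrank (ZMod 2) ↥(C ⊓ neighbor C x) = Fintype.card ι / 2 - 1 ∧
    ∀ c ∈ C, hammingNorm c = d → c ∉ neighbor C x := by
  have hne : ∀ c ∈ C, hammingNorm c = d → dot c x ≠ 0 := fun c hc hcd => by
    simp [hdot c hc hcd]
  obtain ⟨c₀, hc₀, hc₀d⟩ := hd
  have hrank := hC.finrank_inf_ker_dotL hc₀ (hne c₀ hc₀ hc₀d)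
  refine ⟨hrank, isSelfDual_neighbor hC hx, by rwa [inf_neighbor hx], fun c hc hcd hcD => ?_⟩
  exact hne c hc hcd (neighbor_le_ker_dotL hx hcD)

end Codes

theorem neighbor_construction {n : ℕ} (hn : Even n)
    (C : Submodule (ZMod 2) (Fin n → ZMod 2)) (d : ℕ)
    (hC : IsSelfDual C) (hd : MinWeightIs C d)
    (x : Fin n → ZMod 2) (hx : Even (hammingNorm x))
    (hdot : ∀ c ∈ C, hammingNorm c = d → dot c x = 1) :
    Module.finrank (ZMod 2) ↥(C ⊓ LinearMap.ker (dotL x)) = n / 2 - 1 ∧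
    IsSelfDual ((C ⊓ LinearMap.ker (dotL x)) ⊔ Submodule.span (ZMod 2) {x}) ∧
    Module.finrank (ZMod 2)
      ↥(C ⊓ ((C ⊓ LinearMap.ker (dotL x)) ⊔ Submodule.span (ZMod 2) {x})) = n / 2 - 1 ∧
    ∀ c ∈ C, hammingNorm c = d →
      c ∉ (C ⊓ LinearMap.ker (dotL x)) ⊔ Submodule.span (ZMod 2) {x} := by
  obtain ⟨c₀, hc₀, -, hc₀d⟩ := hd.1
  simpa only [Fintype.card_fin] using!
    neighbor_construction_general hC ⟨c₀, hc₀, hc₀d⟩ hx hdot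
end
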